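/- arXiv:1603.04344 — 3 statements merged into one kernel-verified Lean document; each statement's English description precedes it below -/
import Mathlib

section
/- Suppose condition B holds, and let ‖p̃_{ε,ij}‖, ε ∈ (0, ε₀], be another family of stochastic matrices satisfying condition E: p_{ε,ij} − p̃_{ε,ij} → 0 as ε → 0 for all i, j ∈ X. Then there exists ε₀'' ∈ (0, ε₀] such that the Markov chain with transition matrix ‖p̃_{ε,ij}‖ is ergodic for every ε ∈ (0, ε₀''], and its stationary distribution π̃_{ε,i} satisfies π_{ε,i} − π̃_{ε,i} → 0 as ε → 0, for every i ∈ X. -/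
open MeasureTheory Filter Set
open scoped Topology

noncomputable section

/-- Condition B: there exists a ring chain of states `c 0, c 1, …, c N = c 0`
containing all states of the phase space, with
`liminf_{ε→0+} p ε (c (k-1)) (c k) > 0` for `k = 1, …, N`. -/
def CondB {m : ℕ} (p : ℝ → Fin m → Fin m → ℝ) : Prop :=
  ∃ N : ℕ, 0 < N ∧ ∃ c : ℕ → Fin m, c N = c 0 ∧
    (∀ i : Fin m, ∃ k ≤ N, c k = i) ∧
    ∀ k < N, 0 < Filter.liminf (fun ε => p ε (c k) (c (k + 1))) (𝓝[>] (0 : ℝ))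

/-- Ergodicity of a finite Markov chain: the whole state space is one class of
communicating states. -/
def IsErgodicMatrix {m : ℕ} (P : Matrix (Fin m) (Fin m) ℝ) : Prop :=
  ∀ i j, ∃ n : ℕ, 0 < n ∧ 0 < (P ^ n) i j

/-- `π` is a stationary distribution of the transition matrix `p`. -/
def IsStationaryDist {m : ℕ} (p : Fin m → Fin m → ℝ) (π : Fin m → ℝ) : Prop :=
  (∀ i, 0 ≤ π i) ∧ (∑ i, π i = 1) ∧ ∀ j, π j = ∑ i, π i * p i j

/-!
Since the `p̃ ε` lie in the compact set of stochastic matrices, the claim can be checked along an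
ultrafilter finer than `ε → 0+` on which they converge to some stochastic `Q`. Condition E makes
`Q` the limit of `p ε` as well, and every transition of the ring chain keeps positive probability
in `Q`, so `Q` is irreducible. An irreducible matrix has at most one stationary distribution, so by
compactness of the simplex both `π ε` and `π̃ ε` converge to the stationary distribution of `Q`.
-/

open Matrix

section Reachability

variable {X : Type*}

lemma transGen_of_ring {r : X → X → Prop} {N : ℕ} {c : ℕ → X} (hN : 0 < N) (hc : c N = c 0)
    (hsurj : ∀ i, ∃ k ≤ N, c k = i) (hr : ∀ k < N, r (c k) (c (k + 1))) (i j : X) :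
    Relation.TransGen r i j := by
  have hwalk {a b : ℕ} (hab : a ≤ b) (hb : b ≤ N) : Relation.ReflTransGen r (c a) (c b) :=
    (reflTransGen_of_succ_of_le (fun k l ↦ r (c k) (c l))
      (fun k hk ↦ hr k (hk.2.trans_le hb)) hab).lift c fun _ _ h ↦ h
  have hloop : Relation.TransGen r (c 0) (c 0) :=
    .head' (hr 0 hN) (hc ▸ hwalk hN le_rfl)
  obtain ⟨a, ha, rfl⟩ := hsurj i
  obtain ⟨b, hb, rfl⟩ := hsurj j
  exact .trans_right (hc ▸ hwalk ha le_rfl) (hloop.trans_left (hwalk b.zero_le hb))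

lemma isIrreducible_of_transGen {R : Type*} [Ring R] [LinearOrder R] {A : Matrix X X R}
    (hA : ∀ i j, 0 ≤ A i j) (h : ∀ i j, Relation.TransGen (fun i j ↦ 0 < A i j) i j) :
    A.IsIrreducible := by
  let := A.toQuiver
  refine ⟨hA, fun i j ↦ ?_⟩
  induction h i j with
  | single hij => exact ⟨Quiver.Path.nil.cons ⟨hij⟩, Nat.succ_pos _⟩
  | tail _ hjk ih => exact ⟨ih.choose.cons ⟨hjk⟩, Nat.succ_pos _⟩

end Reachability

section Stationary

variable {X R : Type*} [Fintype X] [Field R] [LinearOrder R]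
  {P : Matrix X X R} {u v w : X → R}

/-- The probability vector `v` is a stationary distribution of the matrix `P`: the counterpart of
`IsStationaryDist` for an arbitrary finite state space, phrased with the standard simplex. -/
def IsStationaryVec (P : Matrix X X R) (v : X → R) : Prop :=
  v ∈ stdSimplex R X ∧ v ᵥ* P = v

lemma IsStationaryVec.nonempty (hv : IsStationaryVec P v) : Nonempty X := by
  by_contra hX
  rw [not_nonempty_iff] at hX
  exact (stdSimplex_of_isEmpty_index R X).subset hv.1

variable [IsStrictOrderedRing R]

lemma pos_of_vecMul_eq_self (hP : P.IsIrreducible) (hu : 0 ≤ u) (hu₀ : u ≠ 0)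
    (huP : u ᵥ* P = u) (j : X) : 0 < u j := by
  classical
  have hpow (k : ℕ) : u ᵥ* P ^ k = u := by
    induction k with
    | zero => rw [pow_zero, vecMul_one]
    | succ k ih => rw [pow_succ, ← vecMul_vecMul, ih, huP]
  obtain ⟨i, hi⟩ := Function.ne_iff.1 hu₀
  obtain ⟨k, -, hk⟩ := (isIrreducible_iff_exists_pow_pos hP.nonneg).1 hP i j
  rw [← hpow k]
  exact Finset.sum_pos' (fun a _ ↦ mul_nonneg (hu a) (pow_apply_nonneg hP.nonneg k a j))
    ⟨i, Finset.mem_univ i, mul_pos ((hu i).lt_of_ne' hi) hk⟩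

lemma IsStationaryVec.pos (hP : P.IsIrreducible) (hv : IsStationaryVec P v) (i : X) : 0 < v i := by
  refine pos_of_vecMul_eq_self hP hv.1.1 ?_ hv.2 i
  rintro rfl
  simpa using hv.1.2

/-- Subtracting the largest multiple of `w` that stays below `v` leaves a nonnegative fixed vector
with a zero entry, which irreducibility forces to vanish. -/
lemma IsStationaryVec.unique (hP : P.IsIrreducible) (hv : IsStationaryVec P v)
    (hw : IsStationaryVec P w) : v = w := by
  have := hv.nonempty
  obtain ⟨i, hi⟩ := Finite.exists_min fun i ↦ v i / w i
  set t := v i / w i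
  have hnonneg : 0 ≤ v - t • w := fun j ↦
    sub_nonneg.2 ((le_div_iff₀ (hw.pos hP j)).1 (hi j))
  have hfix : (v - t • w) ᵥ* P = v - t • w := by
    rw [sub_vecMul, smul_vecMul, hv.2, hw.2]
  have hzero : (v - t • w) i = 0 := by
    simp [t, (hw.pos hP i).ne']
  have hvw : v = t • w := by
    by_contra hne
    exact (pos_of_vecMul_eq_self hP hnonneg (sub_ne_zero.2 hne) hfix i).ne' hzero
  have ht : t = 1 := by
    simpa [hvw, ← Finset.mul_sum, hw.1.2] using hv.1.2
  rw [hvw, ht, one_smul]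

variable [DecidableEq X]

lemma abs_vecMul_eq_self (hP : P ∈ rowStochastic R X) (hv : v ᵥ* P = v) : |v| ᵥ* P = |v| := by
  have hle (j : X) : |v| j ≤ (|v| ᵥ* P) j :=
    calc |v| j = |∑ i, v i * P i j| := congrArg abs (congrFun hv j).symm
      _ ≤ ∑ i, |v i * P i j| := Finset.abs_sum_le_sum_abs _ _
      _ = (|v| ᵥ* P) j :=
        Finset.sum_congr rfl fun i _ ↦ by rw [abs_mul, abs_of_nonneg (hP.1 i j), Pi.abs_apply]
  have hsum : ∑ j, |v| j = ∑ j, (|v| ᵥ* P) j := by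
    simp only [← dotProduct_one, ← dotProduct_mulVec, hP.2]
  exact funext fun j ↦
    ((Finset.sum_eq_sum_iff_of_le fun j _ ↦ hle j).1 hsum j (Finset.mem_univ j)).symm

lemma exists_isStationaryVec [Nonempty X] (hP : P ∈ rowStochastic R X) :
    ∃ v, IsStationaryVec P v := by
  have hdet : (P - 1).det = 0 :=
    exists_mulVec_eq_zero_iff.1 ⟨1, one_ne_zero, by rw [sub_mulVec, one_mulVec, hP.2, sub_self]⟩
  obtain ⟨v, hv₀, hv⟩ := exists_vecMul_eq_zero_iff.2 hdet
  rw [vecMul_sub, vecMul_one, sub_eq_zero] at hv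
  obtain ⟨k, hk⟩ := Function.ne_iff.1 hv₀
  have hsum : 0 < ∑ i, |v| i :=
    Finset.sum_pos' (fun i _ ↦ abs_nonneg (v i)) ⟨k, Finset.mem_univ k, abs_pos.2 hk⟩
  refine ⟨(∑ i, |v| i)⁻¹ • |v|, ⟨fun i ↦ ?_, ?_⟩, ?_⟩
  · exact mul_nonneg (inv_nonneg.2 hsum.le) (abs_nonneg (v i))
  · simp only [Pi.smul_apply, smul_eq_mul, ← Finset.mul_sum, inv_mul_cancel₀ hsum.ne']
  · rw [smul_vecMul, abs_vecMul_eq_self hP hv]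

end Stationary

section PersistentTransition

variable {α X : Type*} {l : Filter α} {p q : α → Matrix X X ℝ} {Q : Matrix X X ℝ} {i j : X}

/-- The transition `i → j` has probability bounded away from zero along `l`. Condition B is strong
connectedness of this relation; the explicit bound avoids the junk values of `liminf` on unbounded
functions. -/
def PersistentTransition (l : Filter α) (p : α → Matrix X X ℝ) (i j : X) : Prop :=
  ∃ δ > 0, ∀ᶠ a in l, δ ≤ p a i j

lemma persistentTransition_of_liminf_pos
    (hbdd : l.IsBoundedUnder (· ≥ ·) fun a ↦ p a i j) (h : 0 < l.liminf fun a ↦ p a i j) :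
    PersistentTransition l p i j := by
  obtain ⟨δ, hδ, hlt⟩ := exists_between h
  exact ⟨δ, hδ, (eventually_lt_of_lt_liminf hlt hbdd).mono fun _ ↦ le_of_lt⟩

namespace PersistentTransition

lemma of_tendsto_sub (h : PersistentTransition l p i j) (hpq : Tendsto (p - q) l (𝓝 0)) :
    PersistentTransition l q i j := by
  obtain ⟨δ, hδ, hp⟩ := h
  have hsub : Tendsto (fun a ↦ p a i j - q a i j) l (𝓝 0) := hpq.apply_nhds i |>.apply_nhds j
  refine ⟨δ / 2, half_pos hδ, ?_⟩
  filter_upwards [hp, hsub.eventually_lt_const (half_pos hδ)] with a hpa hsuba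
  linarith

lemma eventually_pos (h : PersistentTransition l p i j) : ∀ᶠ a in l, 0 < p a i j :=
  let ⟨_, hδ, hp⟩ := h
  hp.mono fun _ ↦ hδ.trans_le

lemma lim_pos [l.NeBot] (h : PersistentTransition l p i j) (hp : Tendsto p l (𝓝 Q)) :
    0 < Q i j :=
  let ⟨_, hδ, hle⟩ := h
  hδ.trans_le (ge_of_tendsto (hp.apply_nhds i |>.apply_nhds j) hle)

lemma mono {l' : Filter α} (h : PersistentTransition l p i j) (hl : l' ≤ l) :
    PersistentTransition l' p i j :=
  h.imp fun _ ⟨hδ, hle⟩ ↦ ⟨hδ, hl hle⟩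

lemma eventually_isIrreducible [Finite X] (hnonneg : ∀ᶠ a in l, ∀ i j, 0 ≤ p a i j)
    (hconn : ∀ i j, Relation.TransGen (PersistentTransition l p) i j) :
    ∀ᶠ a in l, (p a).IsIrreducible := by
  have hpos : ∀ᶠ a in l, ∀ i j, PersistentTransition l p i j → 0 < p a i j :=
    eventually_all.2 fun _ ↦ eventually_all.2 fun _ ↦
      eventually_imp_distrib_left.2 eventually_pos
  filter_upwards [hnonneg, hpos] with a ha hpa
  exact isIrreducible_of_transGen ha fun i j ↦ .mono hpa i j (hconn i j)

end PersistentTransition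

end PersistentTransition

section Limits

variable {α X : Type*} [Fintype X] {l : Filter α} {p q : α → Matrix X X ℝ} {v w : α → X → ℝ}
  {Q : Matrix X X ℝ}

lemma isCompact_rowStochastic [DecidableEq X] :
    IsCompact (rowStochastic ℝ X : Set (Matrix X X ℝ)) := by
  have hpi : (rowStochastic ℝ X : Set (Matrix X X ℝ)) = univ.pi fun _ ↦ stdSimplex ℝ X := by
    ext P
    rw [SetLike.mem_coe, mem_rowStochastic_iff_sum]
    exact ⟨fun h i _ ↦ ⟨h.1 i, h.2 i⟩, fun h ↦ ⟨fun i ↦ (h i trivial).1, fun i ↦ (h i trivial).2⟩⟩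
  rw [hpi]
  exact isCompact_univ_pi fun _ ↦ isCompact_stdSimplex ℝ X

lemma IsStationaryVec.tendsto {x : X → ℝ} (hp : Tendsto p l (𝓝 Q)) (hQ : Q.IsIrreducible)
    (hx : IsStationaryVec Q x) (hv : ∀ᶠ a in l, IsStationaryVec (p a) (v a)) :
    Tendsto v l (𝓝 x) := by
  refine (isCompact_stdSimplex ℝ X).tendsto_nhds_of_unique_mapClusterPt
    (hv.mono fun _ h ↦ h.1) fun y hy hcluster ↦ ?_
  obtain ⟨U, hU, hvU⟩ := mapClusterPt_iff_ultrafilter.1 hcluster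
  have hlim : Tendsto (fun a ↦ v a ᵥ* p a) U (𝓝 (y ᵥ* Q)) :=
    ((continuous_fst.matrix_vecMul continuous_snd).tendsto (y, Q)).comp
      (hvU.prodMk_nhds (hp.mono_left hU))
  have hfix : y ᵥ* Q = y :=
    tendsto_nhds_unique (hlim.congr' (hU (hv.mono fun _ h ↦ h.2))) hvU
  exact IsStationaryVec.unique hQ ⟨hy, hfix⟩ hx

lemma tendsto_sub_of_isStationaryVec [DecidableEq X] (hq : ∀ᶠ a in l, q a ∈ rowStochastic ℝ X)
    (hconn : ∀ i j, Relation.TransGen (PersistentTransition l q) i j)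
    (hpq : Tendsto (p - q) l (𝓝 0)) (hv : ∀ᶠ a in l, IsStationaryVec (p a) (v a))
    (hw : ∀ᶠ a in l, IsStationaryVec (q a) (w a)) : Tendsto (v - w) l (𝓝 0) := by
  refine tendsto_iff_ultrafilter _ _ _ |>.2 fun U hU ↦ ?_
  obtain ⟨Q, hQ, hqQ⟩ := isCompact_rowStochastic.ultrafilter_le_nhds' (U.map q) (hU hq)
  replace hqQ : Tendsto q U (𝓝 Q) := hqQ
  have hpQ : Tendsto p U (𝓝 Q) := by
    simpa using (hpq.mono_left hU).add hqQ
  have hirr : Q.IsIrreducible := isIrreducible_of_transGen hQ.1 fun i j ↦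
    .mono (fun _ _ h ↦ (h.mono hU).lim_pos hqQ) i j (hconn i j)
  replace hv : ∀ᶠ a in U, IsStationaryVec (p a) (v a) := hU hv
  have : Nonempty X := hv.exists.choose_spec.nonempty
  obtain ⟨x, hx⟩ := exists_isStationaryVec hQ
  rw [← sub_self x]
  exact (hx.tendsto hpQ hirr hv).sub (hx.tendsto hqQ hirr (hU hw))

theorem stmt1_general [DecidableEq X] (hq : ∀ᶠ a in l, q a ∈ rowStochastic ℝ X)
    (hconn : ∀ i j, Relation.TransGen (PersistentTransition l p) i j)
    (hpq : Tendsto (p - q) l (𝓝 0)) (hv : ∀ᶠ a in l, IsStationaryVec (p a) (v a)) :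
    ∃ w : α → X → ℝ, (∀ᶠ a in l, (q a).IsIrreducible ∧ IsStationaryVec (q a) (w a)) ∧
      Tendsto (v - w) l (𝓝 0) := by
  have hconn' (i j : X) : Relation.TransGen (PersistentTransition l q) i j :=
    .mono (fun _ _ h ↦ h.of_tendsto_sub hpq) i j (hconn i j)
  have hexists : ∀ᶠ a in l, ∃ x, IsStationaryVec (q a) x := by
    filter_upwards [hq, hv] with a hqa hva
    have := hva.nonempty
    exact exists_isStationaryVec hqa
  choose! w hw using fun a (h : ∃ x, IsStationaryVec (q a) x) ↦ h
  replace hw : ∀ᶠ a in l, IsStationaryVec (q a) (w a) := hexists.mono hw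
  exact ⟨w, (PersistentTransition.eventually_isIrreducible (hq.mono fun _ h ↦ h.1) hconn').and hw,
    tendsto_sub_of_isStationaryVec hq hconn' hpq hv hw⟩

end Limits

lemma isStationaryDist_iff {m : ℕ} {P : Matrix (Fin m) (Fin m) ℝ} {v : Fin m → ℝ} :
    IsStationaryDist P v ↔ IsStationaryVec P v := by
  simp only [IsStationaryDist, IsStationaryVec, stdSimplex, mem_ofPred_eq, and_assoc, funext_iff,
    vecMul, dotProduct, eq_comm]

lemma CondB.transGen {m : ℕ} {p : ℝ → Matrix (Fin m) (Fin m) ℝ} (hB : CondB p)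
    (hnonneg : ∀ᶠ ε in 𝓝[>] 0, ∀ i j, 0 ≤ p ε i j) (i j : Fin m) :
    Relation.TransGen (PersistentTransition (𝓝[>] 0) p) i j := by
  obtain ⟨N, hN, c, hc, hsurj, hpos⟩ := hB
  exact transGen_of_ring hN hc hsurj (fun k hk ↦ persistentTransition_of_liminf_pos
    (isBoundedUnder_of_eventually_ge (hnonneg.mono fun _ h ↦ h _ _)) (hpos k hk)) i j

lemma exists_Ioc_forall_of_eventually {P : ℝ → Prop} {ε₀ : ℝ} (hε₀ : 0 < ε₀)
    (h : ∀ᶠ ε in 𝓝[>] 0, P ε) : ∃ ε₁ ∈ Ioc 0 ε₀, ∀ ε ∈ Ioc 0 ε₁, P ε := by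
  obtain ⟨δ, hδ, hsub⟩ := mem_nhdsGT_iff_exists_Ioc_subset.1 h
  exact ⟨min δ ε₀, ⟨lt_min hδ hε₀, min_le_right _ _⟩,
    fun ε hε ↦ hsub ⟨hε.1, hε.2.trans (min_le_left _ _)⟩⟩

/-- Lemma 1 (ii): under conditions B and E, the perturbed chains with
transition matrices `p̃ ε` are ergodic for small `ε` and their stationary distributions
are asymptotically equivalent to those of the chains `p ε`. -/
theorem stmt1 {m : ℕ} (hm : 0 < m) (ε₀ : ℝ) (hε₀ : 0 < ε₀)
    (p ptil : ℝ → Matrix (Fin m) (Fin m) ℝ)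
    (hstoch : ∀ ε ∈ Ioc (0:ℝ) ε₀, (∀ i j, 0 ≤ p ε i j) ∧ ∀ i, ∑ j, p ε i j = 1)
    (hstoch' : ∀ ε ∈ Ioc (0:ℝ) ε₀, (∀ i j, 0 ≤ ptil ε i j) ∧ ∀ i, ∑ j, ptil ε i j = 1)
    (hB : CondB (fun ε i j => p ε i j))
    (π : ℝ → Fin m → ℝ)
    (hπ : ∀ᶠ ε in 𝓝[>] (0:ℝ), IsStationaryDist (fun i j => p ε i j) (π ε))
    (hE : ∀ i j, Tendsto (fun ε => p ε i j - ptil ε i j) (𝓝[>] (0:ℝ)) (𝓝 0)) :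
    ∃ ε₀'' ∈ Ioc (0:ℝ) ε₀, ∃ πtil : ℝ → Fin m → ℝ,
      (∀ ε ∈ Ioc (0:ℝ) ε₀'', IsErgodicMatrix (ptil ε) ∧
        IsStationaryDist (fun i j => ptil ε i j) (πtil ε)) ∧
      ∀ i, Tendsto (fun ε => π ε i - πtil ε i) (𝓝[>] (0:ℝ)) (𝓝 0) := by
  have hε : ∀ᶠ ε in 𝓝[>] 0, ε ∈ Ioc 0 ε₀ := Ioc_mem_nhdsGT hε₀
  obtain ⟨πtil, h, hlim⟩ := stmt1_general
    (hε.mono fun ε h ↦ mem_rowStochastic_iff_sum.2 (hstoch' ε h))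
    (hB.transGen (hε.mono fun ε h ↦ (hstoch ε h).1))
    (tendsto_pi_nhds.2 fun i ↦ tendsto_pi_nhds.2 (hE i))
    (hπ.mono fun _ ↦ isStationaryDist_iff.1)
  obtain ⟨ε₁, hε₁, h⟩ := exists_Ioc_forall_of_eventually hε₀ h
  exact ⟨ε₁, hε₁, πtil, fun ε hε ↦
    ⟨(isIrreducible_iff_exists_pow_pos (h ε hε).1.nonneg).1 (h ε hε).1,
      isStationaryDist_iff.2 (h ε hε).2⟩, tendsto_pi_nhds.1 hlim⟩
end
end

section
/- Suppose condition F holds: p_{ε,ij} → p_{0,ij} as ε → 0 for all i, j ∈ X. Then: (a) the matrix ‖p_{0,ij}‖ is stochastic; (b) condition B holds if and only if the Markov chain η_{0,n} with transition matrix ‖p_{0,ij}‖ is ergodic; and (c) if these equivalent conditions hold, then π_{ε,i} → π_{0,i} as ε → 0 for every i ∈ X, where π_{0,i}, i ∈ X, is the stationary distribution of η_{0,n}. -/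
open MeasureTheory Filter Set
open scoped Topology

noncomputable section

/-!
A ring chain through all states is the same as a closed path through all vertices of the directed
graph of positive entries. On a finite nonempty graph such a path exists exactly when the graph is
strongly connected, i.e. when the limit matrix is irreducible.

For an irreducible matrix, a nonnegative fixed row vector which vanishes at one state vanishes
everywhere. Subtracting from a fixed vector `x` the largest multiple of a positive fixed vector `y`
that keeps the difference nonnegative produces such a zero, so `x` is a multiple of `y`, and there
is at most one stationary distribution. The standard simplex is compact and every cluster point of
the perturbed stationary distributions is stationary for the limit matrix, so they converge.
-/

open Matrix Quiver

section RingChain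

variable {V : Type*}

/-- Existence of a ring chain for the relation `r`: a closed walk with at least one step which
visits every point. It is encoded as a sequence of which only the terms `c 0, …, c N` matter. -/
def HasRingChain (r : V → V → Prop) : Prop :=
  ∃ N : ℕ, 0 < N ∧ ∃ c : ℕ → V, c N = c 0 ∧ (∀ v, ∃ k ≤ N, c k = v) ∧ ∀ k < N, r (c k) (c (k + 1))

variable [Quiver V]

theorem mem_vertices_comp {a b d v : V} (p : Path a b) (q : Path b d) :
    v ∈ (p.comp q).vertices ↔ v ∈ p.vertices ∨ v ∈ q.vertices := by
  rw [Path.vertices_comp, ← p.dropLast_append_end_eq, List.dropLast_concat, List.mem_append,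
    List.mem_append, List.mem_singleton, or_assoc]
  exact or_congr_right (or_iff_right_of_imp fun h => h ▸ q.start_mem_vertices).symm

theorem isChain_vertices {a b : V} (p : Path a b) :
    p.vertices.IsChain fun v w => Nonempty (v ⟶ w) := by
  induction p with
  | nil => exact List.isChain_singleton _
  | cons p e ih =>
    rw [Path.vertices_cons, List.concat_eq_append, List.isChain_append]
    refine ⟨ih, List.isChain_singleton _, fun v hv w hw => ?_⟩
    rw [List.getLast?_eq_some_getLast p.vertices_ne_nil, p.vertices_getLast] at hv
    cases hv
    cases hw
    exact ⟨e⟩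

theorem nonempty_path_of_forall_hom {c : ℕ → V} {k l : ℕ} (hkl : k ≤ l)
    (hc : ∀ n < l, Nonempty (c n ⟶ c (n + 1))) : Nonempty (Path (c k) (c l)) := by
  induction l, hkl using Nat.le_induction with
  | base => exact ⟨Path.nil⟩
  | succ l _ ih =>
    obtain ⟨p⟩ := ih fun n hn => hc n (hn.trans l.lt_succ_self)
    obtain ⟨e⟩ := hc l l.lt_succ_self
    exact ⟨p.cons e⟩

theorem exists_cycle_forall_mem_vertices (hV : IsSStronglyConnected V) (v : V) (s : Finset V) :
    ∃ p : Path v v, 0 < p.length ∧ ∀ w ∈ s, w ∈ p.vertices := by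
  classical
  induction s using Finset.induction_on with
  | empty =>
    obtain ⟨p, hp⟩ := hV v v
    exact ⟨p, hp, by simp⟩
  | insert w s _ ih =>
    obtain ⟨p, hp, hps⟩ := ih
    obtain ⟨q, -⟩ := hV v w
    obtain ⟨q', -⟩ := hV w v
    refine ⟨p.comp (q.comp q'), hp.trans_le (by simp only [Path.length_comp]; omega), ?_⟩
    simp only [mem_vertices_comp, Finset.forall_mem_insert]
    exact ⟨.inr (.inl q.end_mem_vertices), fun u hu => .inl (hps u hu)⟩

theorem HasRingChain.isSStronglyConnected (h : HasRingChain fun v w : V => Nonempty (v ⟶ w)) :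
    IsSStronglyConnected V := by
  obtain ⟨N, hN, c, hcN, hc, hstep⟩ := h
  intro v w
  obtain ⟨k, hk, rfl⟩ := hc v
  obtain ⟨l, hl, rfl⟩ := hc w
  obtain ⟨toEnd⟩ := nonempty_path_of_forall_hom hk hstep
  obtain ⟨firstStep⟩ := hstep 0 hN
  obtain ⟨afterFirst⟩ := nonempty_path_of_forall_hom (Nat.one_le_of_lt hN) hstep
  obtain ⟨fromStart⟩ := nonempty_path_of_forall_hom l.zero_le fun n hn => hstep n (hn.trans_le hl)
  rw [hcN] at toEnd afterFirst
  refine ⟨((toEnd.cons firstStep).comp afterFirst).comp fromStart, ?_⟩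
  simp only [Path.length_comp, Path.length_cons]
  omega

theorem hasRingChain_of_cycle {v : V} (p : Path v v) (hp : 0 < p.length)
    (hmem : ∀ w, w ∈ p.vertices) : HasRingChain fun v w : V => Nonempty (v ⟶ w) := by
  obtain ⟨c, hc⟩ : ∃ c : ℕ → V, ∀ k (hk : k < p.vertices.length), c k = p.vertices[k] :=
    ⟨fun k => p.vertices.getD k v, fun _ hk => List.getD_eq_getElem _ _ hk⟩
  have length_eq : p.vertices.length = p.length + 1 := p.vertices_length
  have first_eq : c 0 = v := by rw [hc 0 (by omega), p.getElem_vertices_zero]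
  have last_eq : c (p.vertices.length - 1) = v := by
    rw [hc _ (by omega), ← List.getLast_eq_getElem p.vertices_ne_nil, p.vertices_getLast]
  rw [length_eq, Nat.add_sub_cancel] at last_eq
  refine ⟨p.length, hp, c, last_eq.trans first_eq.symm, fun w => ?_, fun k hk => ?_⟩
  · obtain ⟨k, hk, rfl⟩ := List.getElem_of_mem (hmem w)
    exact ⟨k, by omega, hc k hk⟩
  · rw [hc k (by omega), hc (k + 1) (by omega)]
    exact List.isChain_iff_getElem.1 (isChain_vertices p) k (by omega)

theorem hasRingChain_iff_isSStronglyConnected [Finite V] [Nonempty V] :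
    HasRingChain (fun v w : V => Nonempty (v ⟶ w)) ↔ IsSStronglyConnected V := by
  refine ⟨HasRingChain.isSStronglyConnected, fun hV => ?_⟩
  have := Fintype.ofFinite V
  obtain ⟨v⟩ := ‹Nonempty V›
  obtain ⟨p, hp, hmem⟩ := exists_cycle_forall_mem_vertices hV v Finset.univ
  exact hasRingChain_of_cycle p hp fun w => hmem w (Finset.mem_univ w)

end RingChain

section Ergodic

theorem hasRingChain_iff_isIrreducible {ι R : Type*} [Finite ι] [Nonempty ι] [Ring R]
    [LinearOrder R] {P : Matrix ι ι R} (hP : ∀ i j, 0 ≤ P i j) :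
    HasRingChain (fun i j => 0 < P i j) ↔ P.IsIrreducible := by
  let := P.toQuiver
  have edge_iff : (fun i j => 0 < P i j) = fun i j => Nonempty (i ⟶ j) :=
    funext₂ fun _ _ => propext ⟨fun h => ⟨⟨h⟩⟩, fun ⟨e⟩ => e.down⟩
  rw [isIrreducible_iff, and_iff_right hP, edge_iff, hasRingChain_iff_isSStronglyConnected]

theorem isErgodicMatrix_iff_isIrreducible {m : ℕ} {P : Matrix (Fin m) (Fin m) ℝ}
    (hP : ∀ i j, 0 ≤ P i j) : IsErgodicMatrix P ↔ P.IsIrreducible :=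
  (isIrreducible_iff_exists_pow_pos hP).symm

theorem condB_iff_hasRingChain_of_tendsto {m : ℕ} {p : ℝ → Fin m → Fin m → ℝ}
    {P : Matrix (Fin m) (Fin m) ℝ}
    (hp : ∀ i j, Tendsto (fun ε => p ε i j) (𝓝[>] 0) (𝓝 (P i j))) :
    CondB p ↔ HasRingChain fun i j => 0 < P i j := by
  simp only [CondB, HasRingChain, (hp _ _).liminf_eq]

end Ergodic

section Stationary

variable {ι R : Type*} [Fintype ι]

/-- The set of stationary distributions of `P`, as fixed points of `P` acting on row vectors. -/
def stationaryDists [Semiring R] [PartialOrder R] (P : Matrix ι ι R) : Set (ι → R) :=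
  {x ∈ stdSimplex R ι | x ᵥ* P = x}

theorem isStationaryDist_iff_mem_stationaryDists {m : ℕ} {P : Matrix (Fin m) (Fin m) ℝ}
    {x : Fin m → ℝ} : IsStationaryDist P x ↔ x ∈ stationaryDists P := by
  simp only [IsStationaryDist, stationaryDists, stdSimplex, mem_ofPred_eq, and_assoc, funext_iff,
    vecMul, dotProduct, eq_comm]

theorem vecMul_pow_eq_self [DecidableEq ι] [Semiring R] {P : Matrix ι ι R} {x : ι → R}
    (hx : x ᵥ* P = x) (n : ℕ) : x ᵥ* P ^ n = x := by
  induction n with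
  | zero => rw [pow_zero, vecMul_one]
  | succ n ih => rw [pow_succ, ← vecMul_vecMul, ih, hx]

theorem eq_zero_of_vecMul_eq_self_of_apply_eq_zero [Ring R] [LinearOrder R]
    [IsStrictOrderedRing R] {P : Matrix ι ι R} (hP : P.IsIrreducible) {x : ι → R} (hx₀ : 0 ≤ x)
    (hx : x ᵥ* P = x) {j : ι} (hj : x j = 0) : x = 0 := by
  classical
  funext i
  obtain ⟨n, -, hn⟩ := (isIrreducible_iff_exists_pow_pos hP.nonneg).1 hP i j
  have sum_eq_zero : ∑ k, x k * (P ^ n) k j = 0 :=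
    (congrFun (vecMul_pow_eq_self hx n) j).trans hj
  have term_eq_zero : x i * (P ^ n) i j = 0 :=
    (Finset.sum_eq_zero_iff_of_nonneg fun k _ =>
      mul_nonneg (hx₀ k) (pow_apply_nonneg hP.nonneg n k j)).1 sum_eq_zero i (Finset.mem_univ i)
  exact (mul_eq_zero.1 term_eq_zero).resolve_right hn.ne'

variable [Field R] [LinearOrder R] [IsStrictOrderedRing R]

theorem exists_eq_smul_of_vecMul_eq_self {P : Matrix ι ι R} (hP : P.IsIrreducible) {x y : ι → R}
    (hx : x ᵥ* P = x) (hy₀ : 0 ≤ y) (hy : y ᵥ* P = y) (hy_ne : y ≠ 0) : ∃ c : R, x = c • y := by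
  have y_pos (i : ι) : 0 < y i := (hy₀ i).lt_of_ne fun hi =>
    hy_ne (eq_zero_of_vecMul_eq_self_of_apply_eq_zero hP hy₀ hy hi.symm)
  obtain ⟨i₀, -⟩ := Function.ne_iff.1 hy_ne
  have : Nonempty ι := ⟨i₀⟩
  obtain ⟨k, hk⟩ := Finite.exists_min fun i => x i / y i
  refine ⟨x k / y k, sub_eq_zero.1 (eq_zero_of_vecMul_eq_self_of_apply_eq_zero hP
    (fun i => ?_) ?_ (j := k) ?_)⟩
  · exact sub_nonneg.2 ((le_div_iff₀ (y_pos i)).1 (hk i))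
  · rw [sub_vecMul, smul_vecMul, hx, hy]
  · exact sub_eq_zero.2 (div_mul_cancel₀ _ (y_pos k).ne').symm

theorem subsingleton_stationaryDists {P : Matrix ι ι R} (hP : P.IsIrreducible) :
    (stationaryDists P).Subsingleton := by
  rintro x ⟨⟨-, hx₁⟩, hx⟩ y ⟨⟨hy₀, hy₁⟩, hy⟩
  have y_ne : y ≠ 0 := by
    rintro rfl
    simp at hy₁
  obtain ⟨c, rfl⟩ := exists_eq_smul_of_vecMul_eq_self hP hx hy₀ hy y_ne
  have hc : c = 1 := by simpa [← Finset.mul_sum, hy₁] using hx₁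
  rw [hc, one_smul]

end Stationary

section Limit

variable {ι α : Type*} [Fintype ι] {l : Filter α}

theorem isClosed_rowStochastic {R : Type*} [DecidableEq ι] [Semiring R] [PartialOrder R]
    [IsOrderedRing R] [TopologicalSpace R] [OrderClosedTopology R] [ContinuousAdd R] :
    IsClosed (rowStochastic R ι : Set (Matrix ι ι R)) := by
  have coe_eq : (rowStochastic R ι : Set (Matrix ι ι R)) =
      ⋂ i, (fun P : Matrix ι ι R => P i) ⁻¹' stdSimplex R ι := by
    ext P
    simp only [SetLike.mem_coe, mem_rowStochastic_iff_sum, mem_iInter, mem_preimage, stdSimplex,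
      mem_ofPred_eq, forall_and]
  rw [coe_eq]
  exact isClosed_iInter fun i => (isClosed_stdSimplex R ι).preimage (continuous_apply i)

theorem mem_stationaryDists_of_tendsto {R : Type*} [Semiring R] [PartialOrder R]
    [TopologicalSpace R] [OrderClosedTopology R] [IsTopologicalSemiring R] [l.NeBot]
    {P : α → Matrix ι ι R} {Q : Matrix ι ι R} {x : α → ι → R} {y : ι → R}
    (hP : Tendsto P l (𝓝 Q)) (hx : ∀ᶠ a in l, x a ∈ stationaryDists (P a))
    (hxy : Tendsto x l (𝓝 y)) : y ∈ stationaryDists Q := by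
  refine ⟨(isClosed_stdSimplex R ι).mem_of_tendsto hxy (hx.mono fun _ h => h.1), ?_⟩
  have vecMul_tendsto : Tendsto (fun a => x a ᵥ* P a) l (𝓝 (y ᵥ* Q)) :=
    ((continuous_fst.matrix_vecMul continuous_snd).tendsto (y, Q)).comp (hxy.prodMk_nhds hP)
  exact tendsto_nhds_unique (vecMul_tendsto.congr' (hx.mono fun _ h => h.2)) hxy

theorem tendsto_of_mem_stationaryDists {P : α → Matrix ι ι ℝ} {Q : Matrix ι ι ℝ}
    {x : α → ι → ℝ} {y : ι → ℝ} (hP : Tendsto P l (𝓝 Q)) (hQ : Q.IsIrreducible)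
    (hx : ∀ᶠ a in l, x a ∈ stationaryDists (P a)) (hy : y ∈ stationaryDists Q) :
    Tendsto x l (𝓝 y) := by
  refine (isCompact_stdSimplex ℝ ι).tendsto_nhds_of_unique_mapClusterPt
    (hx.mono fun _ h => h.1) fun z _ hz => ?_
  obtain ⟨U, hU, hxz⟩ := mapClusterPt_iff_ultrafilter.1 hz
  exact subsingleton_stationaryDists hQ
    (mem_stationaryDists_of_tendsto (hP.mono_left hU) (hU hx) hxz) hy

end Limit

/-- Lemma 1 (iii): under condition F, the limit matrix is stochastic,
condition B is equivalent to ergodicity of the limit chain, and in that case the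
stationary distributions converge. -/
theorem stmt2 {m : ℕ} (hm : 0 < m) (ε₀ : ℝ) (hε₀ : 0 < ε₀)
    (p : ℝ → Matrix (Fin m) (Fin m) ℝ) (p0 : Matrix (Fin m) (Fin m) ℝ)
    (hstoch : ∀ ε ∈ Ioc (0:ℝ) ε₀, (∀ i j, 0 ≤ p ε i j) ∧ ∀ i, ∑ j, p ε i j = 1)
    (hF : ∀ i j, Tendsto (fun ε => p ε i j) (𝓝[>] (0:ℝ)) (𝓝 (p0 i j))) :
    ((∀ i j, 0 ≤ p0 i j) ∧ ∀ i, ∑ j, p0 i j = 1) ∧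
    (CondB (fun ε i j => p ε i j) ↔ IsErgodicMatrix p0) ∧
    (CondB (fun ε i j => p ε i j) →
      ∀ π : ℝ → Fin m → ℝ, (∀ᶠ ε in 𝓝[>] (0:ℝ), IsStationaryDist (fun i j => p ε i j) (π ε)) →
      ∀ π0 : Fin m → ℝ, IsStationaryDist (fun i j => p0 i j) π0 →
      ∀ i, Tendsto (fun ε => π ε i) (𝓝[>] (0:ℝ)) (𝓝 (π0 i))) := by
  have p_tendsto : Tendsto p (𝓝[>] 0) (𝓝 p0) :=
    tendsto_pi_nhds.2 fun i => tendsto_pi_nhds.2 (hF i)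
  have p_mem : ∀ᶠ ε in 𝓝[>] (0 : ℝ), p ε ∈ rowStochastic ℝ (Fin m) :=
    eventually_of_mem (Ioc_mem_nhdsGT hε₀) fun ε hε => mem_rowStochastic_iff_sum.2 (hstoch ε hε)
  have p0_mem := isClosed_rowStochastic.mem_of_tendsto p_tendsto p_mem
  have : Nonempty (Fin m) := ⟨⟨0, hm⟩⟩
  have condB_iff : CondB (fun ε i j => p ε i j) ↔ p0.IsIrreducible :=
    (condB_iff_hasRingChain_of_tendsto hF).trans (hasRingChain_iff_isIrreducible p0_mem.1)
  refine ⟨mem_rowStochastic_iff_sum.1 p0_mem,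
    condB_iff.trans (isErgodicMatrix_iff_isIrreducible p0_mem.1).symm,
    fun hB π hπ π0 hπ0 => tendsto_pi_nhds.1 ?_⟩
  exact tendsto_of_mem_stationaryDists p_tendsto (condB_iff.1 hB)
    (hπ.mono fun _ => isStationaryDist_iff_mem_stationaryDists.1)
    (isStationaryDist_iff_mem_stationaryDists.1 hπ0)
end
end

section
/- Let condition B hold, let v_ε, ε ∈ (0, ε₀], be positive numbers with v_ε → ∞ as ε → 0, and suppose condition D₁ holds. Then, for any family of initial distributions q̄_ε, the random variables κ_ε(1) = Σ_{n=1}^{[v_ε]} κ_{ε,n} converge in distribution as ε → 0 to a nonnegative random variable θ₀ whose distribution is infinitely divisible, not concentrated at zero, and has Laplace transform E e^{−sθ₀} = e^{−A(s)} for s ≥ 0. -/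
open MeasureTheory Filter Set
open scoped Topology ENNReal

noncomputable section

/-!
Let `Φ_ε(s)` be the matrix of Laplace transforms of the semi-Markov kernel. The Laplace transform
of the sum of the first `n` sojourn times is then `Φ_ε(s) ^ n 1`, and `0 ≤ Φ_ε(s) ≤ P_ε` entrywise,
where `P_ε` is the transition matrix of the embedded chain. Put `a = 1 - φ_ε(s)`, the stationary
mean of `1 - Φ_ε(s) 1`. Solving Poisson's equation for `a - (1 - Φ_ε(s) 1)` corrects the
eigenvector `1` of `P_ε` to an approximate eigenvector of `Φ_ε(s)` with eigenvalue `1 - a` and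
defect `O(a²)`, so that `Φ_ε(s) ^ n 1 = e^{-na} + O(a + na²)`. The implied constant does not depend
on `ε`: it is governed by a quantitative maximum principle along the ring of condition B, whose
transition probabilities stay bounded away from zero.

For `n = [r v_ε]` condition D₁ gives the limit `e^{-r A(s)}` from every starting state, hence for
every family of initial distributions. As `A(0+) = 0` the laws are tight, so `e^{-r A(s)}` is the
Laplace transform of a probability law for every `r > 0`: `r = 1` gives `θ₀`, and `r = 1 / n` its
`n`-th convolution root.
-/

section SubstochasticMatrices

open Matrix

variable {ι : Type*} [Fintype ι]

lemma abs_dotProduct_le_of_nonneg {w : ι → ℝ} (hw : 0 ≤ w) (x : ι → ℝ) :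
    |w ⬝ᵥ x| ≤ (w ⬝ᵥ 1) * ‖x‖ := by
  rw [dotProduct_one, Finset.sum_mul]
  refine (Finset.abs_sum_le_sum_abs _ _).trans (Finset.sum_le_sum fun i _ => ?_)
  rw [abs_mul, abs_of_nonneg (hw i)]
  exact mul_le_mul_of_nonneg_left (norm_le_pi_norm x i) (hw i)

lemma dotProduct_const_of_mem_stdSimplex {w : ι → ℝ} (hw : w ∈ stdSimplex ℝ ι) (c : ℝ) :
    w ⬝ᵥ (fun _ => c) = c := by
  simp only [dotProduct, ← Finset.sum_mul, hw.2, one_mul]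

lemma abs_dotProduct_le_norm_of_mem_stdSimplex {w : ι → ℝ} (hw : w ∈ stdSimplex ℝ ι)
    (x : ι → ℝ) : |w ⬝ᵥ x| ≤ ‖x‖ := by
  have := abs_dotProduct_le_of_nonneg hw.1 x
  rwa [dotProduct_one, hw.2, one_mul] at this

lemma tendsto_dotProduct_of_mem_stdSimplex {α : Type*} {l : Filter α} {q f : α → ι → ℝ} {c : ℝ}
    (hq : ∀ᶠ x in l, q x ∈ stdSimplex ℝ ι) (hf : Tendsto f l (𝓝 fun _ => c)) :
    Tendsto (fun x => q x ⬝ᵥ f x) l (𝓝 c) := by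
  rw [tendsto_iff_norm_sub_tendsto_zero] at hf ⊢
  refine squeeze_zero' (Eventually.of_forall fun _ => norm_nonneg _) ?_ hf
  filter_upwards [hq] with x hq
  have hmean : q x ⬝ᵥ f x - c = q x ⬝ᵥ (f x - fun _ => c) := by
    rw [dotProduct_sub, dotProduct_const_of_mem_stdSimplex hq]
  rw [hmean]
  exact abs_dotProduct_le_norm_of_mem_stdSimplex hq _

lemma dotProduct_const_sub_of_mem_stdSimplex {w : ι → ℝ} (hw : w ∈ stdSimplex ℝ ι) (c : ℝ)
    (x : ι → ℝ) : w ⬝ᵥ (fun i => c - x i) = c - w ⬝ᵥ x := by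
  calc w ⬝ᵥ (fun i => c - x i) = w ⬝ᵥ (fun _ => c) - w ⬝ᵥ x := dotProduct_sub w (fun _ => c) x
    _ = c - w ⬝ᵥ x := by rw [dotProduct_const_of_mem_stdSimplex hw]

lemma abs_sub_dotProduct_le {w : ι → ℝ} (hw : w ∈ stdSimplex ℝ ι) {c K : ℝ} {x : ι → ℝ}
    (hx : ∀ i, |c - x i| ≤ K) : |c - w ⬝ᵥ x| ≤ K :=
  Metric.mem_closedBall'.1 <| (convex_closedBall c K).sum_mem (fun i _ => hw.1 i) hw.2
    fun i _ => Metric.mem_closedBall'.2 (hx i)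

/-- The oscillation of a function on the state space is at most `C` times any upper bound for
its defect of harmonicity: a quantitative form of the maximum principle for the chain with
transition matrix `P`, used with one `C` for a whole family of chains. -/
def OscillationBound (P : Matrix ι ι ℝ) (C : ℝ) : Prop :=
  ∀ (g : ι → ℝ) (F : ℝ), 0 ≤ F → (∀ i, g i - (P *ᵥ g) i ≤ F) → ∀ i j, g i - g j ≤ C * F

lemma sub_le_div_of_sub_mulVec_le [DecidableEq ι] {P : Matrix ι ι ℝ}
    (hP : P ∈ rowStochastic ℝ ι) {g : ι → ℝ} {F M δ : ℝ} {b d : ι}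
    (hF : ∀ i, g i - (P *ᵥ g) i ≤ F) (hM : ∀ i, g i ≤ M) (hδ : 0 < δ) (hbd : δ ≤ P b d) :
    M - g d ≤ (M - g b + F) / δ := by
  have hmean : P b ⬝ᵥ (fun j => M - g j) = M - (P *ᵥ g) b :=
    dotProduct_const_sub_of_mem_stdSimplex
      ⟨fun _ => nonneg_of_mem_rowStochastic hP, sum_row_of_mem_rowStochastic hP b⟩ M g
  have hterm : P b d * (M - g d) ≤ P b ⬝ᵥ (fun j => M - g j) :=
    Finset.single_le_sum (f := fun j => P b j * (M - g j))
      (fun j _ => mul_nonneg (nonneg_of_mem_rowStochastic hP) (sub_nonneg.2 (hM j)))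
      (Finset.mem_univ d)
  have hedge : δ * (M - g d) ≤ P b d * (M - g d) :=
    mul_le_mul_of_nonneg_right hbd (sub_nonneg.2 (hM d))
  rw [le_div_iff₀' hδ]
  linarith [hF b]

lemma exists_sub_le_mul_of_reflTransGen [DecidableEq ι] {w : ι → ι → ℝ} {i j : ι}
    (hij : Relation.ReflTransGen (fun a b => 0 < w a b) i j) :
    ∃ C : ℝ, ∀ P ∈ rowStochastic ℝ ι, (∀ a b, w a b ≤ P a b) →
      ∀ (g : ι → ℝ) (F : ℝ), (∀ k, g k - (P *ᵥ g) k ≤ F) → (∀ k, g k ≤ g i) →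
        g i - g j ≤ C * F := by
  induction hij with
  | refl => exact ⟨0, fun P _ _ g F _ _ => by simp⟩
  | @tail b d _ hbd ih =>
    obtain ⟨C, hC⟩ := ih
    refine ⟨(C + 1) / w b d, fun P hP hw g F hF hmax => ?_⟩
    calc g i - g d ≤ (g i - g b + F) / w b d :=
          sub_le_div_of_sub_mulVec_le hP hF hmax hbd (hw b d)
      _ ≤ (C * F + F) / w b d := by gcongr; exact hC P hP hw g F hF hmax
      _ = (C + 1) / w b d * F := by ring

lemma exists_oscillationBound [DecidableEq ι] [Nonempty ι] {w : ι → ι → ℝ}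
    (hw : ∀ i j, Relation.ReflTransGen (fun a b => 0 < w a b) i j) :
    ∃ C, 0 ≤ C ∧ ∀ P ∈ rowStochastic ℝ ι, (∀ a b, w a b ≤ P a b) → OscillationBound P C := by
  choose K hK using fun i j => exists_sub_le_mul_of_reflTransGen (hw i j)
  obtain ⟨C, hC⟩ := (Set.finite_range fun x : ι × ι => K x.1 x.2).bddAbove
  refine ⟨max C 0, le_max_right _ _, fun P hP hwP g F hF0 hF i j => ?_⟩
  obtain ⟨i₀, hmax⟩ := Finite.exists_max g
  calc g i - g j ≤ g i₀ - g j := by gcongr; exact hmax i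
    _ ≤ K i₀ j * F := hK i₀ j P hP hwP g F hF hmax
    _ ≤ max C 0 * F := by
      gcongr
      exact (hC ⟨(i₀, j), rfl⟩).trans (le_max_left _ _)

section Stationary

variable {P : Matrix ι ι ℝ} {C : ℝ} {π : ι → ℝ}

lemma one_sub_add_vecMulVec_mulVec [DecidableEq ι] (P : Matrix ι ι ℝ) (π h : ι → ℝ) :
    (1 - P + vecMulVec 1 π) *ᵥ h = h - P *ᵥ h + fun _ => π ⬝ᵥ h := by
  have hrank_one : vecMulVec (1 : ι → ℝ) π *ᵥ h = fun _ => π ⬝ᵥ h := by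
    ext i
    simp only [mulVec, dotProduct, vecMulVec_apply, Pi.one_apply, one_mul]
  rw [add_mulVec, sub_mulVec, one_mulVec, hrank_one]

lemma dotProduct_one_sub_add_vecMulVec_mulVec [DecidableEq ι] (hπ : π ∈ stdSimplex ℝ ι)
    (hπP : π ᵥ* P = π) (h : ι → ℝ) : π ⬝ᵥ ((1 - P + vecMulVec 1 π) *ᵥ h) = π ⬝ᵥ h := by
  rw [one_sub_add_vecMulVec_mulVec, dotProduct_add, dotProduct_sub, dotProduct_mulVec, hπP,
    dotProduct_const_of_mem_stdSimplex hπ, sub_self, zero_add]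

lemma OscillationBound.isUnit_one_sub_add_vecMulVec [DecidableEq ι] (hC : OscillationBound P C)
    (hπ : π ∈ stdSimplex ℝ ι) (hπP : π ᵥ* P = π) : IsUnit (1 - P + vecMulVec 1 π) := by
  rw [← mulVec_injective_iff_isUnit]
  refine (injective_iff_map_eq_zero (1 - P + vecMulVec 1 π).mulVecLin).2 fun h hh => ?_
  rw [mulVecLin_apply] at hh
  have hmean : π ⬝ᵥ h = 0 := by
    rw [← dotProduct_one_sub_add_vecMulVec_mulVec hπ hπP, hh, dotProduct_zero]
  rw [one_sub_add_vecMulVec_mulVec, hmean] at hh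
  have hle : ∀ i j, h i ≤ h j := fun i j => by
    simpa using hC h 0 le_rfl (fun k => by simpa using (congrFun hh k).le) i j
  ext i
  have hconst : h = fun _ => h i := funext fun j => le_antisymm (hle j i) (hle i j)
  rwa [hconst, dotProduct_const_of_mem_stdSimplex hπ] at hmean

lemma OscillationBound.exists_poisson (hC : OscillationBound P C)
    (hπ : π ∈ stdSimplex ℝ ι) (hπP : π ᵥ* P = π) {f : ι → ℝ} (hf : π ⬝ᵥ f = 0) {F : ℝ}
    (hF : 0 ≤ F) (hfF : ∀ i, f i ≤ F) :
    ∃ h, h - P *ᵥ h = f ∧ ∀ i, |h i| ≤ C * F := by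
  classical
  obtain ⟨h, hh⟩ := mulVec_surjective_iff_isUnit.2
    (hC.isUnit_one_sub_add_vecMulVec hπ hπP) f
  have hmean : π ⬝ᵥ h = 0 := by
    rw [← dotProduct_one_sub_add_vecMulVec_mulVec hπ hπP, hh, hf]
  have hpoisson : h - P *ᵥ h = f := by
    rw [← hh, one_sub_add_vecMulVec_mulVec, hmean]
    exact (add_zero _).symm
  have hosc : ∀ i j, h i - h j ≤ C * F :=
    hC h F hF fun i => (congrFun hpoisson i).trans_le (hfF i)
  refine ⟨h, hpoisson, fun i => ?_⟩
  have := abs_sub_dotProduct_le hπ fun j => abs_sub_le_iff.2 ⟨hosc i j, hosc j i⟩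
  rwa [hmean, sub_zero] at this

end Stationary

lemma norm_mulVec_le_of_nonneg_of_le [DecidableEq ι] {P Φ : Matrix ι ι ℝ}
    (hP : P ∈ rowStochastic ℝ ι) (hΦ : ∀ i j, 0 ≤ Φ i j) (hΦP : ∀ i j, Φ i j ≤ P i j)
    (x : ι → ℝ) : ‖Φ *ᵥ x‖ ≤ ‖x‖ := by
  refine (pi_norm_le_iff_of_nonneg (norm_nonneg x)).2 fun i => ?_
  have hrow : Φ i ⬝ᵥ 1 ≤ 1 := by
    rw [dotProduct_one, ← sum_row_of_mem_rowStochastic hP i]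
    exact Finset.sum_le_sum fun j _ => hΦP i j
  exact (abs_dotProduct_le_of_nonneg (hΦ i) x).trans
    (mul_le_of_le_one_left (norm_nonneg x) hrow)

end SubstochasticMatrices

section ApproximateEigenvectors

variable {𝕜 E : Type*} [NormedField 𝕜] [SeminormedAddCommGroup E] [NormedSpace 𝕜 E]

lemma norm_pow_apply_le {T : Module.End 𝕜 E} (hT : ∀ x, ‖T x‖ ≤ ‖x‖) (n : ℕ) (x : E) :
    ‖(T ^ n) x‖ ≤ ‖x‖ := by
  induction n with
  | zero => simp
  | succ n ih =>
    rw [pow_succ', Module.End.mul_apply]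
    exact (hT _).trans ih

lemma norm_pow_apply_sub_pow_smul_le {T : Module.End 𝕜 E} (hT : ∀ x, ‖T x‖ ≤ ‖x‖) {c : 𝕜}
    (hc : ‖c‖ ≤ 1) (x : E) (n : ℕ) : ‖(T ^ n) x - c ^ n • x‖ ≤ n * ‖T x - c • x‖ := by
  induction n with
  | zero => simp
  | succ n ih =>
    have hsplit : (T ^ (n + 1)) x - c ^ (n + 1) • x
        = (T ^ n) (T x - c • x) + c • ((T ^ n) x - c ^ n • x) := by
      rw [pow_succ T, Module.End.mul_apply, map_sub, map_smul, pow_succ' c, mul_smul, smul_sub]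
      abel
    calc ‖(T ^ (n + 1)) x - c ^ (n + 1) • x‖
        ≤ ‖(T ^ n) (T x - c • x)‖ + ‖c • ((T ^ n) x - c ^ n • x)‖ := by
          rw [hsplit]; exact norm_add_le _ _
      _ ≤ ‖T x - c • x‖ + 1 * (n * ‖T x - c • x‖) := by
          rw [norm_smul]
          gcongr
          exact norm_pow_apply_le hT n _
      _ = (n + 1 : ℕ) * ‖T x - c • x‖ := by push_cast; ring

lemma norm_pow_apply_sub_pow_smul_le_of_approx {T : Module.End 𝕜 E} (hT : ∀ x, ‖T x‖ ≤ ‖x‖)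
    {c : 𝕜} (hc : ‖c‖ ≤ 1) (x y : E) (n : ℕ) :
    ‖(T ^ n) x - c ^ n • x‖ ≤ 2 * ‖y - x‖ + n * ‖T y - c • y‖ := by
  have hsplit : (T ^ n) x - c ^ n • x
      = ((T ^ n) y - c ^ n • y) - (T ^ n) (y - x) + c ^ n • (y - x) := by
    rw [map_sub, smul_sub]
    abel
  have hpow : ‖c ^ n • (y - x)‖ ≤ ‖y - x‖ := by
    rw [norm_smul, norm_pow]
    exact mul_le_of_le_one_left (norm_nonneg _) (pow_le_one₀ (norm_nonneg c) hc)
  rw [hsplit]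
  linarith [norm_add_le (((T ^ n) y - c ^ n • y) - (T ^ n) (y - x)) (c ^ n • (y - x)),
    norm_sub_le ((T ^ n) y - c ^ n • y) ((T ^ n) (y - x)),
    norm_pow_apply_le hT n (y - x), norm_pow_apply_sub_pow_smul_le hT hc y n]

end ApproximateEigenvectors

section PerturbedChains

open Matrix

variable {ι : Type*} [Fintype ι] [DecidableEq ι] {P Φ : Matrix ι ι ℝ} {C : ℝ} {π : ι → ℝ}

lemma one_sub_dotProduct_mulVec_one_mem_Icc (hP : P ∈ rowStochastic ℝ ι)
    (hΦ : ∀ i j, 0 ≤ Φ i j) (hΦP : ∀ i j, Φ i j ≤ P i j) (hπ : π ∈ stdSimplex ℝ ι) :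
    1 - π ⬝ᵥ (Φ *ᵥ 1) ∈ Icc (0 : ℝ) 1 := by
  have hnonneg : 0 ≤ π ⬝ᵥ (Φ *ᵥ 1) :=
    dotProduct_nonneg_of_nonneg hπ.1 fun i => dotProduct_nonneg_of_nonneg (hΦ i) zero_le_one
  have hle : π ⬝ᵥ (Φ *ᵥ 1) ≤ 1 := by
    have := dotProduct_le_dotProduct_of_nonneg_left (w := π) (u := Φ *ᵥ 1) (v := P *ᵥ 1)
      (fun i => dotProduct_le_dotProduct_of_nonneg_right (hΦP i) zero_le_one) hπ.1
    rwa [one_vecMul_of_mem_rowStochastic hP, dotProduct_one, hπ.2] at this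
  constructor <;> linarith

lemma abs_sub_mulVec_le {h : ι → ℝ} (hP : P ∈ rowStochastic ℝ ι) (hΦP : ∀ i j, Φ i j ≤ P i j)
    (i : ι) : |((P - Φ) *ᵥ h) i| ≤ (1 - (Φ *ᵥ 1) i) * ‖h‖ := by
  have hrow : (P - Φ) i ⬝ᵥ 1 = 1 - (Φ *ᵥ 1) i := by
    change ((P - Φ) *ᵥ 1) i = _
    rw [sub_mulVec, one_vecMul_of_mem_rowStochastic hP, Pi.sub_apply, Pi.one_apply]
  rw [← hrow]
  exact abs_dotProduct_le_of_nonneg (fun j => sub_nonneg.2 (hΦP i j)) h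

-- First-order perturbation of the eigenvector `1` of `P`: with `h` solving Poisson's equation
-- `h - P h = a - (1 - Φ 1)`, the defect `Φ (1 + h) - (1 - a) (1 + h)` is `a h - (P - Φ) h`.
lemma OscillationBound.exists_approx_eigenvector (hC : OscillationBound P C) (hC0 : 0 ≤ C)
    (hP : P ∈ rowStochastic ℝ ι) (hπ : π ∈ stdSimplex ℝ ι) (hπP : π ᵥ* P = π)
    (hΦ : ∀ i j, 0 ≤ Φ i j) (hΦP : ∀ i j, Φ i j ≤ P i j) {a : ℝ}
    (ha : a = 1 - π ⬝ᵥ (Φ *ᵥ 1)) :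
    ∃ y : ι → ℝ, ‖y - 1‖ ≤ C * a ∧
      ‖Φ *ᵥ y - (1 - a) • y‖ ≤ 2 * C * (C + 1) * a ^ 2 := by
  have ha0 : 0 ≤ a := ha ▸ (one_sub_dotProduct_mulVec_one_mem_Icc hP hΦ hΦP hπ).1
  have hΦ1 : ∀ i, (Φ *ᵥ 1) i ≤ 1 := fun i => by
    have := dotProduct_le_dotProduct_of_nonneg_right (hΦP i) (zero_le_one (α := ι → ℝ))
    rwa [dotProduct_one, dotProduct_one, sum_row_of_mem_rowStochastic hP,
      ← dotProduct_one] at this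
  have hcentred : π ⬝ᵥ (fun i => a - (1 - (Φ *ᵥ 1) i)) = 0 := by
    rw [dotProduct_const_sub_of_mem_stdSimplex hπ, dotProduct_const_sub_of_mem_stdSimplex hπ, ha,
      sub_self]
  obtain ⟨h, hpoisson, hhC⟩ := hC.exists_poisson hπ hπP hcentred ha0
    fun i => by linarith [hΦ1 i]
  have hnorm : ‖h‖ ≤ C * a := (pi_norm_le_iff_of_nonneg (by positivity)).2 hhC
  refine ⟨1 + h, by rwa [add_sub_cancel_left],
    (pi_norm_le_iff_of_nonneg (by positivity)).2 fun i => ?_⟩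
  have hpi := congrFun hpoisson i
  rw [Pi.sub_apply] at hpi
  have hdefect : (Φ *ᵥ (1 + h) - (1 - a) • (1 + h)) i = a * h i - ((P - Φ) *ᵥ h) i := by
    simp only [mulVec_add, sub_mulVec, Pi.sub_apply, Pi.add_apply, Pi.smul_apply, Pi.one_apply,
      smul_eq_mul]
    linarith
  have hkill : 1 - (Φ *ᵥ 1) i ≤ (2 * C + 1) * a := by
    have hPh : |(P *ᵥ h) i| ≤ C * a := (norm_le_pi_norm (P *ᵥ h) i).trans <|
      (norm_mulVec_le_of_nonneg_of_le hP (fun _ _ => nonneg_of_mem_rowStochastic hP)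
        (fun _ _ => le_rfl) h).trans hnorm
    linarith [abs_le.1 (hhC i), abs_le.1 hPh]
  calc ‖(Φ *ᵥ (1 + h) - (1 - a) • (1 + h)) i‖
      ≤ |a * h i| + |((P - Φ) *ᵥ h) i| := by rw [hdefect]; exact abs_sub _ _
    _ ≤ a * (C * a) + (2 * C + 1) * a * (C * a) := by
        rw [abs_mul, abs_of_nonneg ha0]
        refine add_le_add (mul_le_mul_of_nonneg_left (hhC i) ha0)
          ((abs_sub_mulVec_le hP hΦP i).trans ?_)
        exact mul_le_mul hkill hnorm (norm_nonneg h) (by positivity)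
    _ = 2 * C * (C + 1) * a ^ 2 := by ring

lemma OscillationBound.norm_pow_mulVec_one_sub_exp_le (hC : OscillationBound P C) (hC0 : 0 ≤ C)
    (hP : P ∈ rowStochastic ℝ ι) (hπ : π ∈ stdSimplex ℝ ι) (hπP : π ᵥ* P = π)
    (hΦ : ∀ i j, 0 ≤ Φ i j) (hΦP : ∀ i j, Φ i j ≤ P i j) {a : ℝ}
    (ha : a = 1 - π ⬝ᵥ (Φ *ᵥ 1)) (n : ℕ) :
    ‖Φ ^ n *ᵥ 1 - fun _ => Real.exp (-(n * a))‖ ≤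
      (2 * C + 1) * (C + 1) * (a + n * a ^ 2) := by
  obtain ⟨ha0, ha1⟩ : a ∈ Icc (0 : ℝ) 1 := ha ▸ one_sub_dotProduct_mulVec_one_mem_Icc hP hΦ hΦP hπ
  obtain ⟨y, hy, hΦy⟩ := hC.exists_approx_eigenvector hC0 hP hπ hπP hΦ hΦP ha
  have hyn : ‖y‖ ≤ C + 1 := by
    have h1 : ‖(1 : ι → ℝ)‖ ≤ 1 := (pi_norm_le_iff_of_nonneg zero_le_one).2 fun i => by simp
    have h2 : C * a ≤ C := mul_le_of_le_one_right hC0 ha1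
    linarith [norm_le_norm_sub_add y 1]
  have hexp : |1 - a - Real.exp (-a)| ≤ a ^ 2 := by
    have := Real.abs_exp_sub_one_sub_id_le (x := -a) (by rwa [abs_neg, abs_of_nonneg ha0])
    rwa [neg_sq, show Real.exp (-a) - 1 - -a = -(1 - a - Real.exp (-a)) by ring, abs_neg] at this
  have hdefect : ‖Φ *ᵥ y - Real.exp (-a) • y‖ ≤ (2 * C + 1) * (C + 1) * a ^ 2 :=
    calc ‖Φ *ᵥ y - Real.exp (-a) • y‖
        = ‖(Φ *ᵥ y - (1 - a) • y) + (1 - a - Real.exp (-a)) • y‖ := by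
          rw [sub_smul _ (Real.exp (-a)), sub_add_sub_cancel]
      _ ≤ 2 * C * (C + 1) * a ^ 2 + a ^ 2 * (C + 1) :=
          norm_add_le_of_le hΦy <| (norm_smul _ y).trans_le <|
            mul_le_mul hexp hyn (norm_nonneg y) (sq_nonneg a)
      _ = (2 * C + 1) * (C + 1) * a ^ 2 := by ring
  have hpow : (fun _ => Real.exp (-(n * a)) : ι → ℝ) = Real.exp (-a) ^ n • 1 := by
    ext i
    rw [← Real.exp_nat_mul]
    simp
  have hcontract := norm_pow_apply_sub_pow_smul_le_of_approx (T := toLin' Φ)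
    (norm_mulVec_le_of_nonneg_of_le hP hΦ hΦP) (c := Real.exp (-a))
    (by simpa using ha0) 1 y n
  rw [← toLin'_pow, toLin'_apply, toLin'_apply, ← hpow] at hcontract
  calc ‖Φ ^ n *ᵥ 1 - fun _ => Real.exp (-(n * a))‖
      ≤ 2 * (C * a) + n * ((2 * C + 1) * (C + 1) * a ^ 2) := hcontract.trans (by gcongr)
    _ ≤ (2 * C + 1) * (C + 1) * (a + n * a ^ 2) := by
        have hconst : 2 * C ≤ (2 * C + 1) * (C + 1) := by nlinarith
        linarith [mul_le_mul_of_nonneg_right hconst ha0]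

lemma tendsto_natFloor_const_mul_mul {α : Type*} {l : Filter α} {v a : α → ℝ} {A r : ℝ}
    (hr : 0 < r) (hv : Tendsto v l atTop) (ha : Tendsto (fun x => v x * a x) l (𝓝 A)) :
    Tendsto (fun x => (⌊r * v x⌋₊ : ℝ) * a x) l (𝓝 (r * A)) := by
  refine (((tendsto_nat_floor_mul_div_atTop hr.le).comp hv).mul ha).congr' ?_
  filter_upwards [hv.eventually_gt_atTop 0] with x hx
  simp only [Function.comp_apply]
  field_simp

theorem tendsto_pow_mulVec_one {α : Type*} {l : Filter α} {P Φ : α → Matrix ι ι ℝ}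
    {π : α → ι → ℝ} {C : ℝ} (hC0 : 0 ≤ C) (hC : ∀ᶠ x in l, OscillationBound (P x) C)
    (hP : ∀ᶠ x in l, P x ∈ rowStochastic ℝ ι) (hπ : ∀ᶠ x in l, π x ∈ stdSimplex ℝ ι)
    (hπP : ∀ᶠ x in l, π x ᵥ* P x = π x) (hΦ : ∀ᶠ x in l, ∀ i j, 0 ≤ Φ x i j)
    (hΦP : ∀ᶠ x in l, ∀ i j, Φ x i j ≤ P x i j) {v : α → ℝ} (hv : Tendsto v l atTop) {A : ℝ}
    (hA : Tendsto (fun x => v x * (1 - π x ⬝ᵥ (Φ x *ᵥ 1))) l (𝓝 A)) {r : ℝ} (hr : 0 < r) :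
    Tendsto (fun x => Φ x ^ ⌊r * v x⌋₊ *ᵥ 1) l (𝓝 fun _ => Real.exp (-(r * A))) := by
  set a : α → ℝ := fun x => 1 - π x ⬝ᵥ (Φ x *ᵥ 1)
  have hna := tendsto_natFloor_const_mul_mul hr hv hA
  have ha0 : Tendsto a l (𝓝 0) := by
    have := (tendsto_inv_atTop_zero.comp hv).mul hA
    rw [zero_mul] at this
    refine this.congr' ?_
    filter_upwards [hv.eventually_gt_atTop 0] with x hx
    exact inv_mul_cancel_left₀ hx.ne' (a x)
  have herror : Tendsto (fun x => (2 * C + 1) * (C + 1) * (a x + ⌊r * v x⌋₊ * a x ^ 2)) l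
      (𝓝 0) := by
    have := (ha0.add (hna.mul ha0)).const_mul ((2 * C + 1) * (C + 1))
    simp only [mul_zero, add_zero] at this
    exact this.congr fun x => by ring
  have hexp : Tendsto (fun x => (fun _ => Real.exp (-(⌊r * v x⌋₊ * a x)) : ι → ℝ)) l
      (𝓝 fun _ => Real.exp (-(r * A))) :=
    tendsto_pi_nhds.2 fun _ => (Real.continuous_exp.tendsto _).comp hna.neg
  have hdiff : Tendsto (fun x => Φ x ^ ⌊r * v x⌋₊ *ᵥ 1 -
      (fun _ => Real.exp (-(⌊r * v x⌋₊ * a x)))) l (𝓝 0) := by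
    refine squeeze_zero_norm' ?_ herror
    filter_upwards [hC, hP, hπ, hπP, hΦ, hΦP] with x hC hP hπ hπP hΦ hΦP
    exact hC.norm_pow_mulVec_one_sub_exp_le hC0 hP hπ hπP hΦ hΦP rfl _
  simpa using hdiff.add hexp

end PerturbedChains

section EmbeddedChains

open Matrix

lemma eventually_half_liminf_le {α : Type*} {l : Filter α} {p : α → ℝ}
    (hp : ∀ᶠ x in l, 0 ≤ p x) : ∀ᶠ x in l, liminf p l / 2 ≤ p x := by
  rcases le_or_gt (liminf p l) 0 with h | h
  · filter_upwards [hp] with x hx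
    linarith
  · exact (eventually_lt_of_lt_liminf (half_lt_self h)
      (isBoundedUnder_of_eventually_ge hp)).mono fun _ => le_of_lt

lemma exists_eventually_oscillationBound {α ι : Type*} {l : Filter α} [Fintype ι]
    [DecidableEq ι] [Nonempty ι] {P : α → Matrix ι ι ℝ}
    (hP : ∀ᶠ x in l, P x ∈ rowStochastic ℝ ι)
    (hreach : ∀ i j, Relation.ReflTransGen (fun a b => 0 < liminf (fun x => P x a b) l) i j) :
    ∃ C, 0 ≤ C ∧ ∀ᶠ x in l, OscillationBound (P x) C := by
  obtain ⟨C, hC0, hC⟩ := exists_oscillationBound (w := fun a b => liminf (fun x => P x a b) l / 2)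
    fun i j => Relation.ReflTransGen.mono (fun a b hab => half_pos hab) i j (hreach i j)
  have hle : ∀ᶠ x in l, ∀ a b, liminf (fun x => P x a b) l / 2 ≤ P x a b :=
    eventually_all.2 fun a => eventually_all.2 fun b =>
      eventually_half_liminf_le (hP.mono fun x hx => hx.1 a b)
  refine ⟨C, hC0, ?_⟩
  filter_upwards [hP, hle] with x hPx hlex using hC (P x) hPx hlex

lemma CondB.reflTransGen {m : ℕ} {p : ℝ → Fin m → Fin m → ℝ} (hB : CondB p) (i j : Fin m) :
    Relation.ReflTransGen (fun a b => 0 < liminf (fun ε => p ε a b) (𝓝[>] (0 : ℝ))) i j := by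
  obtain ⟨N, -, c, hring, hall, hpos⟩ := hB
  have hwalk : ∀ k l, k ≤ l → l ≤ N → Relation.ReflTransGen
      (fun a b => 0 < liminf (fun ε => p ε a b) (𝓝[>] (0 : ℝ))) (c k) (c l) := by
    intro k l hkl hlN
    induction l, hkl using Nat.le_induction with
    | base => exact .refl
    | succ l _ ih => exact (ih (by lia)).tail (hpos l hlN)
  obtain ⟨k, hk, rfl⟩ := hall i
  obtain ⟨l, hl, rfl⟩ := hall j
  have hback := hwalk k N hk le_rfl
  rw [hring] at hback
  exact hback.trans (hwalk 0 l l.zero_le hl)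

lemma CondB.congr {m : ℕ} {p p' : ℝ → Fin m → Fin m → ℝ} (h : p =ᶠ[𝓝[>] 0] p') (hB : CondB p) :
    CondB p' := by
  obtain ⟨N, hN, c, hring, hall, hpos⟩ := hB
  refine ⟨N, hN, c, hring, hall, fun k hk => ?_⟩
  rw [← liminf_congr (h.mono fun ε hε => congr_fun₂ hε (c k) (c (k + 1)))]
  exact hpos k hk

lemma IsStationaryDist.mem_stdSimplex {m : ℕ} {p : Fin m → Fin m → ℝ} {π : Fin m → ℝ}
    (h : IsStationaryDist p π) : π ∈ stdSimplex ℝ (Fin m) :=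
  ⟨h.1, h.2.1⟩

lemma IsStationaryDist.vecMul_eq {m : ℕ} {p : Matrix (Fin m) (Fin m) ℝ} {π : Fin m → ℝ}
    (h : IsStationaryDist p π) : π ᵥ* p = π :=
  funext fun j => (h.2.2 j).symm

end EmbeddedChains

section LaplaceTransforms

variable {α : Type*} [MeasurableSpace α] {μ : Measure α} {f : α → ℝ} {s : ℝ}

lemma integrable_exp_neg_mul [IsFiniteMeasure μ] (hs : 0 ≤ s) (hf : AEMeasurable f μ)
    (hf0 : ∀ᵐ x ∂μ, 0 ≤ f x) : Integrable (fun x => Real.exp (-(s * f x))) μ := by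
  refine Integrable.of_bound (C := 1) (by fun_prop) ?_
  filter_upwards [hf0] with x hx
  rw [Real.norm_of_nonneg (Real.exp_pos _).le, Real.exp_le_one_iff, neg_nonpos]
  exact mul_nonneg hs hx

lemma integral_exp_neg_mul_le_measureReal_univ [IsFiniteMeasure μ] (hs : 0 ≤ s)
    (hf : AEMeasurable f μ) (hf0 : ∀ᵐ x ∂μ, 0 ≤ f x) :
    ∫ x, Real.exp (-(s * f x)) ∂μ ≤ μ.real univ := by
  have hle : ∫ x, Real.exp (-(s * f x)) ∂μ ≤ ∫ _, (1 : ℝ) ∂μ := by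
    refine integral_mono_ae (integrable_exp_neg_mul hs hf hf0) (integrable_const 1) ?_
    filter_upwards [hf0] with x hx
    exact Real.exp_le_one_iff.2 (neg_nonpos.2 (mul_nonneg hs hx))
  simpa using hle

end LaplaceTransforms

section MarkovRenewal

open Matrix

@[to_additive]
lemma prod_Icc_succ_eq_prod_fin {M : Type*} [CommMonoid M] (f : ℕ → M) (n : ℕ) :
    ∏ k ∈ Finset.Icc 1 n, f k = ∏ k : Fin n, f (k + 1) := by
  rw [← Finset.prod_range fun k => f (k + 1), Finset.range_eq_Ico,
    Finset.prod_Ico_add' f 0 n 1]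
  rfl

lemma pow_mulVec_one_apply_eq_sum_prod {ι R : Type*} [Fintype ι] [DecidableEq ι]
    [CommSemiring R] (M : Matrix ι ι R) (n : ℕ) (i : ι) :
    (M ^ n *ᵥ 1) i =
      ∑ J : Fin n → ι, ∏ k, M ((Fin.cons i J : Fin (n + 1) → ι) k.castSucc) (J k) := by
  induction n generalizing i with
  | zero => simp
  | succ n ih =>
    rw [pow_succ', ← mulVec_mulVec, ← (Fin.consEquiv fun _ => ι).sum_comp,
      Fintype.sum_prod_type]
    refine Finset.sum_congr rfl fun j _ => ?_
    rw [ih j, Finset.mul_sum]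
    refine Finset.sum_congr rfl fun J _ => ?_
    simp only [Fin.consEquiv_apply, Fin.prod_univ_succ, Fin.castSucc_zero, Fin.cons_zero,
      ← Fin.succ_castSucc, Fin.cons_succ]

variable {ι Ω : Type*} [MeasurableSpace Ω]

/-- The event that the chain `η` follows the path `J` during its first `n` steps. -/
def pathEvent (η : ℕ → Ω → ι) {n : ℕ} (J : Fin (n + 1) → ι) : Set Ω :=
  {ω | ∀ k : Fin (n + 1), η k ω = J k}

/-- The law of the first sojourn time on the event that the first jump leads from `i` to `j`: the
measure with distribution function `Q i j`. It has the mass of that event. -/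
def jumpLaw (η : ℕ → Ω → ι) (κ : ℕ → Ω → ℝ) (P : ι → Measure Ω) (i j : ι) : Measure ℝ :=
  ((P i).restrict {ω | η 1 ω = j}).map (κ 1)

/-- The transition matrix of the embedded Markov chain. -/
def transitionMatrix (η : ℕ → Ω → ι) (P : ι → Measure Ω) : Matrix ι ι ℝ :=
  of fun i j => (P i).real {ω | η 1 ω = j}

/-- The matrix of Laplace transforms at `s` of the semi-Markov kernel. -/
def laplaceMatrix (η : ℕ → Ω → ι) (κ : ℕ → Ω → ℝ) (P : ι → Measure Ω) (s : ℝ) :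
    Matrix ι ι ℝ :=
  of fun i j => ∫ x, Real.exp (-(s * x)) ∂jumpLaw η κ P i j

variable {η : ℕ → Ω → ι} {κ : ℕ → Ω → ℝ} {P : ι → Measure Ω} {Q : ι → ι → ℝ → ℝ}

lemma laplaceMatrix_nonneg (s : ℝ) (i j : ι) : 0 ≤ laplaceMatrix η κ P s i j :=
  integral_nonneg fun _ => (Real.exp_pos _).le

variable [MeasurableSpace ι]

/-- `(η, κ)` is a Markov renewal process with semi-Markov kernel `Q`, where `P i` is its law when
it starts in `i`; the kernel is encoded by the finite-dimensional distributions. The sojourn times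
are `κ 1, κ 2, …`, and `κ 0` is left free. -/
structure IsMarkovRenewal (η : ℕ → Ω → ι) (κ : ℕ → Ω → ℝ) (P : ι → Measure Ω)
    (Q : ι → ι → ℝ → ℝ) : Prop where
  isProbabilityMeasure : ∀ i, IsProbabilityMeasure (P i)
  measurable_state : ∀ n, Measurable (η n)
  measurable_sojourn : ∀ n, Measurable (κ n)
  sojourn_nonneg : ∀ n ω, 0 ≤ κ n ω
  measure_path : ∀ (n : ℕ) (I : ℕ → ι) (T : ℕ → ℝ),
    P (I 0) {ω | ∀ k ≤ n, (η k ω = I k ∧ (1 ≤ k → κ k ω ≤ T k))}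
      = ENNReal.ofReal (∏ k ∈ Finset.Icc 1 n, Q (I (k - 1)) (I k) (T k))

namespace IsMarkovRenewal

-- `Q` may take negative values off the paths of positive probability, hence the induction.
lemma measure_path_eq_prod (h : IsMarkovRenewal η κ P Q) (n : ℕ) (I : ℕ → ι) (T : ℕ → ℝ) :
    P (I 0) {ω | ∀ k ≤ n, (η k ω = I k ∧ (1 ≤ k → κ k ω ≤ T k))}
      = ∏ k ∈ Finset.Icc 1 n, ENNReal.ofReal (Q (I (k - 1)) (I k) (T k)) := by
  induction n with
  | zero => simpa using h.measure_path 0 I T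
  | succ n ih =>
    rw [Finset.prod_Icc_succ_top (by lia), ← ih]
    by_cases h0 : P (I 0) {ω | ∀ k ≤ n, (η k ω = I k ∧ (1 ≤ k → κ k ω ≤ T k))} = 0
    · rw [h0, zero_mul]
      refine measure_mono_null ?_ h0
      intro ω hω k hk
      exact hω k (hk.trans n.le_succ)
    · rw [h.measure_path, ENNReal.ofReal_eq_zero, not_le] at h0
      rw [h.measure_path, h.measure_path, Finset.prod_Icc_succ_top (by lia),
        ENNReal.ofReal_mul h0.le]

lemma measure_pathEvent_inter (h : IsMarkovRenewal η κ P Q) {n : ℕ} (J : Fin (n + 1) → ι)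
    (T : Fin n → ℝ) :
    P (J 0) (pathEvent η J ∩ {ω | ∀ k : Fin n, κ (k + 1) ω ≤ T k})
      = ∏ k : Fin n, ENNReal.ofReal (Q (J k.castSucc) (J k.succ) (T k)) := by
  have hcast : ∀ k : Fin n, Fin.ofNat (n + 1) k = k.castSucc := fun k =>
    Fin.ext (Nat.mod_eq_of_lt k.castSucc.2)
  have hsucc : ∀ k : Fin n, Fin.ofNat (n + 1) (k + 1) = k.succ := fun k =>
    Fin.ext (Nat.mod_eq_of_lt k.succ.2)
  have hpath := h.measure_path_eq_prod n (fun k => J (Fin.ofNat (n + 1) k))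
    fun k => (Fin.cons 0 T : Fin (n + 1) → ℝ) (Fin.ofNat (n + 1) k)
  have hevent : {ω | ∀ k ≤ n, (η k ω = J (Fin.ofNat (n + 1) k) ∧
      (1 ≤ k → κ k ω ≤ (Fin.cons 0 T : Fin (n + 1) → ℝ) (Fin.ofNat (n + 1) k)))}
      = pathEvent η J ∩ {ω | ∀ k : Fin n, κ (k + 1) ω ≤ T k} := by
    ext ω
    constructor
    · intro hω
      refine ⟨fun k => ?_, fun k => ?_⟩
      · simpa using (hω k (by lia)).1
      · simpa only [hsucc, Fin.cons_succ] using (hω (k + 1) (by lia)).2 (by lia)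
    · rintro ⟨hη, hκ⟩ k hk
      lift k to Fin (n + 1) using by lia
      refine ⟨by simpa using hη k, fun hk1 => ?_⟩
      obtain ⟨k, rfl⟩ := Fin.exists_succ_eq.2 (by rintro rfl; simp at hk1 : k ≠ 0)
      simpa only [Fin.val_succ, hsucc, Fin.cons_succ] using hκ k
  rw [hevent, prod_Icc_succ_eq_prod_fin] at hpath
  simpa only [Nat.add_sub_cancel, hcast, hsucc, Fin.cons_succ, Fin.ofNat_zero] using hpath

lemma ae_state_zero [MeasurableSingletonClass ι] (h : IsMarkovRenewal η κ P Q) (i : ι) :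
    ∀ᵐ ω ∂P i, η 0 ω = i := by
  have := h.isProbabilityMeasure i
  have hpath := h.measure_path 0 (fun _ => i) fun _ => 0
  have hmeas : MeasurableSet {ω | η 0 ω = i} := h.measurable_state 0 (measurableSet_singleton i)
  refine (prob_compl_eq_zero_iff hmeas).2 ?_
  simpa using hpath

lemma jumpLaw_Iic [MeasurableSingletonClass ι] (h : IsMarkovRenewal η κ P Q) (i j : ι) (t : ℝ) :
    jumpLaw η κ P i j (Iic t) = ENNReal.ofReal (Q i j t) := by
  have hκ : MeasurableSet (κ 1 ⁻¹' Iic t) := h.measurable_sojourn 1 measurableSet_Iic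
  rw [jumpLaw, Measure.map_apply (h.measurable_sojourn 1) measurableSet_Iic,
    Measure.restrict_apply hκ]
  have hpath := h.measure_pathEvent_inter (n := 1) ![i, j] fun _ => t
  rw [Fin.prod_univ_one] at hpath
  refine (measure_congr (eventuallyEq_set.2 ?_)).trans hpath
  filter_upwards [h.ae_state_zero i] with ω hω
  simp [pathEvent, Fin.forall_fin_two, hω, and_comm]

lemma measurableSet_pathEvent [MeasurableSingletonClass ι] (h : IsMarkovRenewal η κ P Q) {n : ℕ}
    (J : Fin (n + 1) → ι) : MeasurableSet (pathEvent η J) := by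
  simp only [pathEvent, ofPred_forall]
  exact MeasurableSet.iInter fun k => h.measurable_state k (measurableSet_singleton _)

lemma isFiniteMeasure_jumpLaw (h : IsMarkovRenewal η κ P Q) (i j : ι) :
    IsFiniteMeasure (jumpLaw η κ P i j) := by
  have := h.isProbabilityMeasure i
  unfold jumpLaw
  infer_instance

lemma ae_jumpLaw_nonneg (h : IsMarkovRenewal η κ P Q) (i j : ι) :
    ∀ᵐ x ∂jumpLaw η κ P i j, 0 ≤ x :=
  (ae_map_iff (h.measurable_sojourn 1).aemeasurable measurableSet_Ici).2 <|
    Eventually.of_forall fun ω => h.sojourn_nonneg 1 ω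

lemma jumpLaw_real_univ (h : IsMarkovRenewal η κ P Q) (i j : ι) :
    (jumpLaw η κ P i j).real univ = transitionMatrix η P i j := by
  rw [jumpLaw, map_measureReal_apply (h.measurable_sojourn 1) MeasurableSet.univ, preimage_univ,
    measureReal_restrict_apply_univ]
  rfl

lemma laplaceMatrix_le_transitionMatrix (h : IsMarkovRenewal η κ P Q) {s : ℝ} (hs : 0 ≤ s)
    (i j : ι) : laplaceMatrix η κ P s i j ≤ transitionMatrix η P i j := by
  have := h.isFiniteMeasure_jumpLaw i j
  rw [← h.jumpLaw_real_univ i j]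
  exact integral_exp_neg_mul_le_measureReal_univ hs aemeasurable_id (h.ae_jumpLaw_nonneg i j)

theorem map_restrict_pathEvent [MeasurableSingletonClass ι] (h : IsMarkovRenewal η κ P Q) {n : ℕ}
    (J : Fin (n + 1) → ι) :
    ((P (J 0)).restrict (pathEvent η J)).map (fun ω (k : Fin n) => κ (k + 1) ω)
      = Measure.pi fun k : Fin n => jumpLaw η κ P (J k.castSucc) (J k.succ) := by
  have := h.isFiniteMeasure_jumpLaw
  have hmeas : Measurable fun ω (k : Fin n) => κ (k + 1) ω :=
    measurable_pi_lambda _ fun k => h.measurable_sojourn _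
  refine (Measure.pi_eq_generateFrom (C := fun _ => range Iic)
    (fun _ => (borel_eq_generateFrom_Iic ℝ).symm.trans BorelSpace.measurable_eq.symm)
    (fun _ => isPiSystem_Iic)
    (fun k => ⟨fun N => Iic (N : ℝ), fun N => mem_range_self _, fun N => measure_lt_top _ _,
      iUnion_eq_univ_iff.2 exists_nat_ge⟩) fun S hS => ?_).symm
  choose T hT using hS
  obtain rfl : (fun k => Iic (T k)) = S := funext hT
  have hbox : MeasurableSet (univ.pi fun k => Iic (T k)) :=
    MeasurableSet.univ_pi fun _ => measurableSet_Iic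
  rw [Measure.map_apply hmeas hbox, Measure.restrict_apply (hmeas hbox), inter_comm]
  simp only [h.jumpLaw_Iic, ← h.measure_pathEvent_inter J T]
  congr 2
  ext ω
  simp only [mem_preimage, mem_univ_pi, mem_Iic, mem_ofPred_eq]

lemma setIntegral_pathEvent_prod [MeasurableSingletonClass ι] (h : IsMarkovRenewal η κ P Q)
    {n : ℕ} (J : Fin (n + 1) → ι) {f : Fin n → ℝ → ℝ} (hf : ∀ k, Measurable (f k)) :
    ∫ ω in pathEvent η J, ∏ k, f k (κ (k + 1) ω) ∂P (J 0)
      = ∏ k, ∫ x, f k x ∂jumpLaw η κ P (J k.castSucc) (J k.succ) := by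
  have := h.isFiniteMeasure_jumpLaw
  rw [← integral_fintype_prod_eq_prod, ← h.map_restrict_pathEvent J, integral_map]
  · exact (measurable_pi_lambda _ fun k => h.measurable_sojourn _).aemeasurable
  · exact (Finset.measurable_prod _ fun k _ =>
      (hf k).comp (measurable_pi_apply k)).aestronglyMeasurable

lemma ae_mem_iUnion_pathEvent [MeasurableSingletonClass ι] (h : IsMarkovRenewal η κ P Q) (n : ℕ)
    (i : ι) : ∀ᵐ ω ∂P i, ω ∈ ⋃ J : Fin n → ι, pathEvent η (Fin.cons i J : Fin (n + 1) → ι) := by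
  filter_upwards [h.ae_state_zero i] with ω hω
  refine mem_iUnion.2 ⟨fun k => η (k + 1) ω, fun k => ?_⟩
  cases k using Fin.cases with
  | zero => exact hω
  | succ k => rfl

lemma integrable_exp_neg_sum (h : IsMarkovRenewal η κ P Q) {s : ℝ} (hs : 0 ≤ s) (i : ι)
    (F : Finset ℕ) : Integrable (fun ω => Real.exp (-(s * ∑ k ∈ F, κ k ω))) (P i) :=
  have := h.isProbabilityMeasure i
  integrable_exp_neg_mul hs
    (Finset.measurable_sum F fun k _ => h.measurable_sojourn k).aemeasurable
    (Eventually.of_forall fun ω => Finset.sum_nonneg fun k _ => h.sojourn_nonneg k ω)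

variable [Fintype ι] [MeasurableSingletonClass ι]

theorem integral_exp_neg_sum [DecidableEq ι] (h : IsMarkovRenewal η κ P Q) {s : ℝ} (hs : 0 ≤ s)
    (n : ℕ) (i : ι) :
    ∫ ω, Real.exp (-(s * ∑ k ∈ Finset.Icc 1 n, κ k ω)) ∂P i
      = (laplaceMatrix η κ P s ^ n *ᵥ 1) i := by
  have hdisjoint : Pairwise (Function.onFun Disjoint fun J : Fin n → ι =>
      pathEvent η (Fin.cons i J : Fin (n + 1) → ι)) := by
    refine fun J J' hJ => disjoint_left.2 fun ω hω hω' => hJ (funext fun k => ?_)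
    exact (hω k.succ).symm.trans (hω' k.succ)
  rw [← Measure.restrict_eq_self_of_ae_mem (h.ae_mem_iUnion_pathEvent n i),
    integral_iUnion_fintype (fun J => h.measurableSet_pathEvent _) hdisjoint
      fun J => (h.integrable_exp_neg_sum hs i _).integrableOn,
    pow_mulVec_one_apply_eq_sum_prod]
  refine Finset.sum_congr rfl fun J _ => ?_
  have hpath := h.setIntegral_pathEvent_prod (Fin.cons i J)
    (f := fun _ x => Real.exp (-(s * x))) fun _ => by fun_prop
  simp only [Fin.cons_zero, Fin.cons_succ, ← Real.exp_sum] at hpath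
  simpa only [sum_Icc_succ_eq_sum_fin, Finset.mul_sum, Finset.sum_neg_distrib, laplaceMatrix,
    of_apply] using hpath

lemma laplaceMatrix_mulVec_one (h : IsMarkovRenewal η κ P Q) {s : ℝ} (hs : 0 ≤ s) (i : ι) :
    (laplaceMatrix η κ P s *ᵥ 1) i = ∫ ω, Real.exp (-(s * κ 1 ω)) ∂P i := by
  classical
  simpa using (h.integral_exp_neg_sum hs 1 i).symm

lemma transitionMatrix_mem_rowStochastic [DecidableEq ι] (h : IsMarkovRenewal η κ P Q) :
    transitionMatrix η P ∈ rowStochastic ℝ ι := by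
  refine mem_rowStochastic_iff_sum.2 ⟨fun i j => measureReal_nonneg, fun i => ?_⟩
  have := h.isProbabilityMeasure i
  have hsum := sum_measureReal_preimage_singleton (μ := P i) (f := η 1) Finset.univ
    fun j _ => h.measurable_state 1 (measurableSet_singleton j)
  rwa [Finset.coe_univ, preimage_univ, probReal_univ] at hsum

end IsMarkovRenewal
end MarkovRenewal

section LaplaceContinuity

lemma ae_nonneg_of_measure_Iio_eq_zero {μ : Measure ℝ} (hμ : μ (Iio 0) = 0) :
    ∀ᵐ x ∂μ, 0 ≤ x :=
  (measure_eq_zero_iff_ae_notMem.1 hμ).mono fun _ hx => not_lt.1 hx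

lemma measureReal_norm_gt_le_integral {μ : Measure ℝ} [IsProbabilityMeasure μ]
    (hμ : μ (Iio 0) = 0) {x : ℝ} (hx : 0 < x) :
    μ.real {y | x < ‖y‖} ≤ 2 * (1 - ∫ y, Real.exp (-(x⁻¹ * y)) ∂μ) := by
  have hae := ae_nonneg_of_measure_Iio_eq_zero hμ
  have hint : Integrable (fun y => Real.exp (-(x⁻¹ * y))) μ :=
    integrable_exp_neg_mul (inv_pos.2 hx).le aemeasurable_id hae
  have hnonneg : 0 ≤ᵐ[μ] fun y => 1 - Real.exp (-(x⁻¹ * y)) := by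
    filter_upwards [hae] with y hy
    exact sub_nonneg.2 (Real.exp_le_one_iff.2 (neg_nonpos.2 (by positivity)))
  have hmarkov := mul_meas_ge_le_integral_of_nonneg hnonneg
    ((integrable_const 1).sub hint) (1 / 2)
  have hlarge : ∀ᵐ y ∂μ, x < ‖y‖ → 1 / 2 ≤ 1 - Real.exp (-(x⁻¹ * y)) := by
    filter_upwards [hae] with y hy hxy
    rw [Real.norm_of_nonneg hy] at hxy
    have hone : 1 ≤ x⁻¹ * y := by rw [inv_mul_eq_div]; exact (one_le_div hx).2 hxy.le
    have hexp : Real.exp (-(x⁻¹ * y)) ≤ Real.exp (-1) := Real.exp_le_exp.2 (neg_le_neg hone)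
    linarith [Real.exp_neg_one_lt_half]
  have hle : μ.real {y | x < ‖y‖} ≤ μ.real {y | 1 / 2 ≤ 1 - Real.exp (-(x⁻¹ * y))} :=
    ENNReal.toReal_mono (measure_ne_top _ _) (measure_mono_ae hlarge)
  rw [integral_sub (integrable_const 1) hint] at hmarkov
  simp only [integral_const, probReal_univ, smul_eq_mul, mul_one] at hmarkov
  linarith

/-- `μ` is the law of a nonnegative random variable whose Laplace transform is `exp (-B s)` for
`s > 0`; nothing is asserted about `B` outside `(0, ∞)`. -/
structure HasLaplaceExponent (μ : Measure ℝ) (B : ℝ → ℝ) : Prop where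
  isProbabilityMeasure : IsProbabilityMeasure μ
  measure_Iio : μ (Iio 0) = 0
  integral_exp_neg_mul : ∀ s > 0, ∫ x, Real.exp (-(s * x)) ∂μ = Real.exp (-(B s))

variable {B : ℝ → ℝ}

lemma HasLaplaceExponent.measure_singleton_zero_lt_one {μ : Measure ℝ}
    (h : HasLaplaceExponent μ B) {s : ℝ} (hs : 0 < s) (hB : 0 < B s) : μ {0} < 1 := by
  have := h.isProbabilityMeasure
  refine prob_le_one.lt_of_ne fun hone => hB.ne ?_
  have hzero : ∀ᵐ x ∂μ, x = 0 := (prob_compl_eq_zero_iff (measurableSet_singleton 0)).2 hone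
  have hexp : ∫ x, Real.exp (-(s * x)) ∂μ = 1 := by
    rw [integral_congr_ae (g := fun _ => 1) (hzero.mono fun x hx => by simp [hx])]
    simp
  have hlaplace := hexp.symm.trans (h.integral_exp_neg_mul s hs)
  exact (neg_eq_zero.1 (Real.exp_eq_one_iff _ |>.1 hlaplace.symm)).symm

theorem isTightMeasureSet_range_of_tendsto_laplace {μ : ℕ → Measure ℝ}
    [∀ n, IsProbabilityMeasure (μ n)] (hμ : ∀ n, μ n (Iio 0) = 0)
    (hlim : ∀ s > 0, Tendsto (fun n => ∫ x, Real.exp (-(s * x)) ∂μ n) atTop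
      (𝓝 (Real.exp (-(B s))))) (hB : Tendsto B (𝓝[>] 0) (𝓝 0)) :
    IsTightMeasureSet (range μ) := by
  refine isTightMeasureSet_range_of_tendsto_limsup_measure_norm_gt ?_
  have hbound : Tendsto (fun x => ENNReal.ofReal (2 * (1 - Real.exp (-(B x⁻¹))))) atTop
      (𝓝 0) := by
    have hBinv : Tendsto (fun x => B x⁻¹) atTop (𝓝 0) := hB.comp tendsto_inv_atTop_nhdsGT_zero
    have := ENNReal.tendsto_ofReal ((hBinv.neg.rexp.const_sub 1).const_mul 2)
    simpa using this
  refine tendsto_of_tendsto_of_tendsto_of_le_of_le' tendsto_const_nhds hbound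
    (Eventually.of_forall fun _ => zero_le) ?_
  filter_upwards [eventually_gt_atTop 0] with x hx
  have htail := ENNReal.tendsto_ofReal (((hlim x⁻¹ (inv_pos.2 hx)).const_sub 1).const_mul 2)
  rw [← htail.limsup_eq]
  refine limsup_le_limsup (Eventually.of_forall fun n => ?_)
  refine (ENNReal.le_ofReal_iff_toReal_le (measure_ne_top _ _) ?_).2
    (measureReal_norm_gt_le_integral (hμ n) hx)
  exact measureReal_nonneg.trans (measureReal_norm_gt_le_integral (hμ n) hx)

variable {α : Type*} {l : Filter α} [l.NeBot]

theorem hasLaplaceExponent_of_tendsto {ρ : α → ProbabilityMeasure ℝ} {ν : ProbabilityMeasure ℝ}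
    (hν : Tendsto ρ l (𝓝 ν)) (hρ : ∀ a, (ρ a : Measure ℝ) (Iio 0) = 0)
    (hlim : ∀ s > 0, Tendsto (fun a => ∫ x, Real.exp (-(s * x)) ∂(ρ a : Measure ℝ)) l
      (𝓝 (Real.exp (-(B s))))) : HasLaplaceExponent ν B := by
  have hν0 : (ν : Measure ℝ) (Iio 0) = 0 := by
    have := ProbabilityMeasure.le_liminf_measure_open_of_tendsto hν isOpen_Iio (G := Iio 0)
    simpa [hρ] using this
  refine ⟨inferInstance, hν0, fun s hs => ?_⟩
  let f : BoundedContinuousFunction ℝ ℝ := BoundedContinuousFunction.ofNormedAddCommGroup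
    (fun x => Real.exp (-(s * max x 0))) (by fun_prop) 1 fun x => by
      rw [Real.norm_of_nonneg (Real.exp_pos _).le, Real.exp_le_one_iff, neg_nonpos]
      positivity
  have hf : ∀ μ : Measure ℝ, μ (Iio 0) = 0 →
      ∫ x, f x ∂μ = ∫ x, Real.exp (-(s * x)) ∂μ := fun μ hμ =>
    integral_congr_ae <| (ae_nonneg_of_measure_Iio_eq_zero hμ).mono fun x hx => by
      simp [f, max_eq_left hx]
  have hfν := ProbabilityMeasure.tendsto_iff_forall_integral_tendsto.1 hν f
  simp only [hf _ (hρ _), hf _ hν0] at hfν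
  exact tendsto_nhds_unique hfν (hlim s hs)

theorem exists_hasLaplaceExponent_of_tendsto_atTop {μ : ℕ → Measure ℝ}
    [hprob : ∀ n, IsProbabilityMeasure (μ n)] (hμ : ∀ n, μ n (Iio 0) = 0)
    (hlim : ∀ s > 0, Tendsto (fun n => ∫ x, Real.exp (-(s * x)) ∂μ n) atTop
      (𝓝 (Real.exp (-(B s))))) (hB : Tendsto B (𝓝[>] 0) (𝓝 0)) :
    ∃ ν, HasLaplaceExponent ν B := by
  let ρ : ℕ → ProbabilityMeasure ℝ := fun n => ⟨μ n, hprob n⟩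
  have htight := isTightMeasureSet_range_of_tendsto_laplace hμ hlim hB
  have hcompact : IsCompact (closure (range ρ)) := by
    refine isCompact_closure_of_isTightMeasureSet ?_
    simp only [exists_range_iff]
    exact htight
  obtain ⟨ν, -, ψ, hψ, hν⟩ :=
    hcompact.tendsto_subseq fun n => subset_closure (mem_range_self n)
  exact ⟨ν, hasLaplaceExponent_of_tendsto hν (fun n => hμ (ψ n)) fun s hs =>
    (hlim s hs).comp hψ.tendsto_atTop⟩

theorem exists_hasLaplaceExponent_of_tendsto [l.IsCountablyGenerated] {Ω : Type*}
    [MeasurableSpace Ω] {P : α → Measure Ω} {X : α → Ω → ℝ}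
    [∀ a, IsProbabilityMeasure (P a)] (hX : ∀ a, Measurable (X a))
    (hX0 : ∀ a ω, 0 ≤ X a ω)
    (hlim : ∀ s > 0, Tendsto (fun a => ∫ ω, Real.exp (-(s * X a ω)) ∂P a) l
      (𝓝 (Real.exp (-(B s))))) (hB : Tendsto B (𝓝[>] 0) (𝓝 0)) :
    ∃ ν, HasLaplaceExponent ν B := by
  obtain ⟨u, hu⟩ := l.exists_seq_tendsto
  have := fun n => Measure.isProbabilityMeasure_map (μ := P (u n)) (hX (u n)).aemeasurable
  refine exists_hasLaplaceExponent_of_tendsto_atTop (μ := fun n => (P (u n)).map (X (u n)))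
    (fun n => ?_) (fun s hs => ?_) hB
  · rw [Measure.map_apply (hX (u n)) measurableSet_Iio]
    convert measure_empty (μ := P (u n)) using 2
    exact eq_empty_of_forall_notMem fun ω => not_lt.2 (hX0 (u n) ω)
  · refine ((hlim s hs).comp hu).congr fun n => (integral_map (hX (u n)).aemeasurable ?_).symm
    exact Measurable.aestronglyMeasurable (by fun_prop)

end LaplaceContinuity

section Limits

open Matrix

variable {ι Ω α : Type*} [Fintype ι] {l : Filter α}

lemma integral_sum_ofReal_smul_measure [MeasurableSpace Ω] {P : ι → Measure Ω} {q : ι → ℝ}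
    {f : Ω → ℝ} (hq : ∀ i, 0 ≤ q i) (hf : ∀ i, Integrable f (P i)) :
    ∫ ω, f ω ∂(∑ i, ENNReal.ofReal (q i) • P i) = q ⬝ᵥ fun i => ∫ ω, f ω ∂P i := by
  rw [integral_finsetSum_measure fun i _ => (hf i).smul_measure ENNReal.ofReal_ne_top]
  simp only [integral_smul_measure, ENNReal.toReal_ofReal (hq _), smul_eq_mul, dotProduct]

lemma tendsto_integral_of_eventuallyEq_sum_smul [MeasurableSpace Ω] {P : α → ι → Measure Ω}
    {ρ : α → Measure Ω} {q : α → ι → ℝ} {f : α → Ω → ℝ} {c : ℝ}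
    (hq : ∀ᶠ x in l, q x ∈ stdSimplex ℝ ι)
    (hρ : ∀ᶠ x in l, ρ x = ∑ i, ENNReal.ofReal (q x i) • P x i)
    (hf : ∀ᶠ x in l, ∀ i, Integrable (f x) (P x i))
    (hlim : Tendsto (fun x i => ∫ ω, f x ω ∂P x i) l (𝓝 fun _ => c)) :
    Tendsto (fun x => ∫ ω, f x ω ∂ρ x) l (𝓝 c) := by
  refine (tendsto_dotProduct_of_mem_stdSimplex hq hlim).congr' ?_
  filter_upwards [hq, hρ, hf] with x hqx hρx hfx
  rw [hρx, integral_sum_ofReal_smul_measure hqx.1 hfx]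

theorem tendsto_integral_exp_neg_sum [MeasurableSpace ι] [MeasurableSingletonClass ι]
    [Nonempty ι] [MeasurableSpace Ω] {η : α → ℕ → Ω → ι} {κ : α → ℕ → Ω → ℝ}
    {P : α → ι → Measure Ω} {Q : α → ι → ι → ℝ → ℝ} {π : α → ι → ℝ} {v : α → ℝ} {r s A : ℝ}
    (hMR : ∀ᶠ x in l, IsMarkovRenewal (η x) (κ x) (P x) (Q x))
    (hreach : ∀ i j, Relation.ReflTransGen
      (fun a b => 0 < liminf (fun x => transitionMatrix (η x) (P x) a b) l) i j)
    (hπ : ∀ᶠ x in l, π x ∈ stdSimplex ℝ ι)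
    (hπP : ∀ᶠ x in l, π x ᵥ* transitionMatrix (η x) (P x) = π x) (hv : Tendsto v l atTop)
    (hs : 0 ≤ s)
    (hA : Tendsto (fun x => v x * (1 - π x ⬝ᵥ fun i => ∫ ω, Real.exp (-(s * κ x 1 ω)) ∂P x i)) l
      (𝓝 A)) (hr : 0 < r) :
    Tendsto (fun x i => ∫ ω, Real.exp (-(s * ∑ k ∈ Finset.Icc 1 ⌊r * v x⌋₊, κ x k ω)) ∂P x i) l
      (𝓝 fun _ => Real.exp (-(r * A))) := by
  classical
  have hP := hMR.mono fun x hx => hx.transitionMatrix_mem_rowStochastic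
  obtain ⟨C, hC0, hC⟩ := exists_eventually_oscillationBound hP hreach
  have hΦA : Tendsto (fun x => v x * (1 - π x ⬝ᵥ (laplaceMatrix (η x) (κ x) (P x) s *ᵥ 1))) l
      (𝓝 A) := by
    refine hA.congr' (hMR.mono fun x hx => ?_)
    simp only [← hx.laplaceMatrix_mulVec_one hs]
  refine (tendsto_pow_mulVec_one hC0 hC hP hπ hπP (Eventually.of_forall fun x =>
    laplaceMatrix_nonneg s) (hMR.mono fun x hx => hx.laplaceMatrix_le_transitionMatrix hs) hv
    hΦA hr).congr' (hMR.mono fun x hx => ?_)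
  exact funext fun i => (hx.integral_exp_neg_sum hs _ i).symm

end Limits

/-- Theorem 2, sufficiency part: under conditions B and D₁, the step-sum
reward variables `κ_ε(1) = Σ_{n=1}^{[v_ε]} κ_{ε,n}` converge in distribution (equivalently,
their Laplace transforms converge) to an infinitely divisible nonnegative random variable
`θ₀` with Laplace transform `e^{−A(s)}`, whose distribution is not concentrated at zero. -/
theorem stmt3 {m : ℕ} (hm : 0 < m) (ε₀ : ℝ) (hε₀ : 0 < ε₀)
    {Ω : Type} [MeasurableSpace Ω]
    -- the Markov renewal process (η_{ε,n}, κ_{ε,n}) and the laws P_i given η_{ε,0} = i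
    (η : ℝ → ℕ → Ω → Fin m) (κ : ℝ → ℕ → Ω → ℝ)
    (Pstart : ℝ → Fin m → Measure Ω)
    (hprob : ∀ ε i, IsProbabilityMeasure (Pstart ε i))
    (hmeas : ∀ ε n, Measurable (η ε n) ∧ Measurable (κ ε n))
    (hκnn : ∀ ε n ω, 0 ≤ κ ε n ω)
    -- Markov renewal structure: semi-Markov transition kernel Q_{ε,ij}(t)
    (Q : ℝ → Fin m → Fin m → ℝ → ℝ)
    (hMRP : ∀ ε ∈ Ioc (0:ℝ) ε₀, ∀ n : ℕ, ∀ I : ℕ → Fin m, ∀ T : ℕ → ℝ,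
      Pstart ε (I 0) {ω | ∀ k ≤ n, (η ε k ω = I k ∧ (1 ≤ k → κ ε k ω ≤ T k))}
        = ENNReal.ofReal (∏ k ∈ Finset.Icc 1 n, Q ε (I (k - 1)) (I k) (T k)))
    -- transition probabilities of the embedded Markov chain
    (p : ℝ → Fin m → Fin m → ℝ)
    (hp : ∀ ε ∈ Ioc (0:ℝ) ε₀, ∀ i j, p ε i j = (Pstart ε i {ω | η ε 1 ω = j}).toReal)
    (hB : CondB p)
    -- stationary distributions of the embedded Markov chains
    (π : ℝ → Fin m → ℝ)
    (hπ : ∀ᶠ ε in 𝓝[>] (0:ℝ), IsStationaryDist (fun i j => p ε i j) (π ε))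
    -- arbitrary family of initial distributions q̄_ε and corresponding laws P_ε
    (q : ℝ → Fin m → ℝ) (Pq : ℝ → Measure Ω)
    (hq : ∀ ε ∈ Ioc (0:ℝ) ε₀, (∀ i, 0 ≤ q ε i) ∧ ∑ i, q ε i = 1)
    (hmix : ∀ ε ∈ Ioc (0:ℝ) ε₀, Pq ε = ∑ i, ENNReal.ofReal (q ε i) • Pstart ε i)
    -- normalizing function v_ε → ∞
    (v : ℝ → ℝ) (hvpos : ∀ ε ∈ Ioc (0:ℝ) ε₀, 0 < v ε)
    (hvinf : Tendsto v (𝓝[>] (0:ℝ)) atTop)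
    -- condition D₁
    (A : ℝ → ℝ)
    (hD : ∀ s > 0, Tendsto
      (fun ε => v ε * (1 - ∑ i, π ε i * ∫ ω, Real.exp (-(s * κ ε 1 ω)) ∂(Pstart ε i)))
      (𝓝[>] (0:ℝ)) (𝓝 (A s)))
    (hApos : ∀ s > 0, 0 < A s)
    (hA0 : Tendsto A (𝓝[>] (0:ℝ)) (𝓝 0)) :
    ∃ μ : Measure ℝ, IsProbabilityMeasure μ ∧ μ (Iio 0) = 0 ∧ μ {0} < 1 ∧
      -- the limit law has Laplace transform e^{−A(s)}
      (∀ s > 0, ∫ x, Real.exp (-(s * x)) ∂μ = Real.exp (-(A s))) ∧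
      -- the limit law is infinitely divisible
      (∀ n : ℕ, 0 < n → ∃ ν : Measure ℝ, IsProbabilityMeasure ν ∧ ν (Iio 0) = 0 ∧
        ∀ s > 0, ∫ x, Real.exp (-(s * x)) ∂ν = Real.exp (-(A s / n))) ∧
      -- κ_ε(1) converges in distribution to the limit law
      ∀ s > 0, Tendsto
        (fun ε => ∫ ω, Real.exp (-(s * ∑ n ∈ Finset.Icc 1 (Nat.floor (v ε)), κ ε n ω)) ∂(Pq ε))
        (𝓝[>] (0:ℝ)) (𝓝 (Real.exp (-(A s)))) := by
  have hstates : Nonempty (Fin m) := Fin.pos_iff_nonempty.1 hm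
  have hε : ∀ᶠ ε in 𝓝[>] (0 : ℝ), ε ∈ Ioc 0 ε₀ := Ioc_mem_nhdsGT hε₀
  have hMR : ∀ᶠ ε in 𝓝[>] (0 : ℝ), IsMarkovRenewal (η ε) (κ ε) (Pstart ε) (Q ε) :=
    hε.mono fun ε hε =>
      ⟨hprob ε, fun n => (hmeas ε n).1, fun n => (hmeas ε n).2, hκnn ε, hMRP ε hε⟩
  have hpP : ∀ᶠ ε in 𝓝[>] (0 : ℝ), p ε = transitionMatrix (η ε) (Pstart ε) :=
    hε.mono fun ε hε => funext₂ (hp ε hε)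
  have hlaplace (r : ℝ) (hr : 0 < r) (s : ℝ) (hs : 0 < s) :=
    tendsto_integral_exp_neg_sum hMR (hB.congr hpP).reflTransGen
      (hπ.mono fun _ => IsStationaryDist.mem_stdSimplex)
      ((hπ.and hpP).mono fun ε h => h.2 ▸ h.1.vecMul_eq) hvinf hs.le (hD s hs) hr
  have hlaw (r : ℝ) (hr : 0 < r) : ∃ μ, HasLaplaceExponent μ fun s => r * A s :=
    exists_hasLaplaceExponent_of_tendsto
      (fun ε => Finset.measurable_sum _ fun k _ => (hmeas ε k).2)
      (fun ε ω => Finset.sum_nonneg fun k _ => hκnn ε k ω)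
      (fun s hs => tendsto_pi_nhds.1 (hlaplace r hr s hs) hstates.some)
      (by simpa using hA0.const_mul r)
  obtain ⟨μ, hμ⟩ := by simpa only [one_mul] using hlaw 1 one_pos
  refine ⟨μ, hμ.isProbabilityMeasure, hμ.measure_Iio,
    hμ.measure_singleton_zero_lt_one one_pos (hApos 1 one_pos), hμ.integral_exp_neg_mul,
    fun n hn => ?_, fun s hs => ?_⟩
  · obtain ⟨ν, hν⟩ := by simpa only [inv_mul_eq_div] using hlaw (n : ℝ)⁻¹ (by positivity)
    exact ⟨ν, hν.isProbabilityMeasure, hν.measure_Iio, hν.integral_exp_neg_mul⟩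
  · exact tendsto_integral_of_eventuallyEq_sum_smul (hε.mono hq) (hε.mono hmix)
      (hMR.mono fun ε hε i => hε.integrable_exp_neg_sum hs.le i _)
      (by simpa only [one_mul] using hlaplace 1 one_pos s hs)
end
end
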